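/- arXiv:1203.5979 — 3 statements merged into one kernel-verified Lean document; each statement's English description precedes it below -/
import Mathlib

section
/- Let u solve the Goursat problem and u⁰ solve the basic problem, and set z = u − u⁰. Then for all i ∈ {1,…,N₁} and j ∈ {1,…,N₂}: ‖z‖_{i,j} ≤ ‖z‖_{i−1,j}·(1 + h₁h₂R′_{i,j}) + h₁R_{i,j}·h₂·Σ_{s=1}^{j−1} [(2N_{i,s} + L_{i,s})‖z‖_{i,s} + h(N_{i,s} + L_{i,s})A] + h₁h₂R_{i,j}(L_{i,j} + N_{i,j})‖z‖_{i,j−1} + h₁h₂·h·R_{i,j}(N_{i,j} + L_{i,j})A, where ‖z‖_{0,j} = ‖z‖_{i,0} = 0. -/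
open Set

noncomputable section

/-- The closed domain `D̄ = [0,X] × [0,Y]`. -/
def clD (X Y : ℝ) : Set (ℝ × ℝ) := Icc 0 X ×ˢ Icc 0 Y

/-- The open domain `D = (0,X) × (0,Y)`. -/
def opD (X Y : ℝ) : Set (ℝ × ℝ) := Ioo 0 X ×ˢ Ioo 0 Y

/-- Partial derivative in the first variable. -/
def pdx (u : ℝ × ℝ → ℝ) (p : ℝ × ℝ) : ℝ := deriv (fun t => u (t, p.2)) p.1

/-- Partial derivative in the second variable. -/
def pdy (u : ℝ × ℝ → ℝ) (p : ℝ × ℝ) : ℝ := deriv (fun t => u (p.1, t)) p.2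

/-- Mixed partial derivative `∂²u/∂x∂y` (derivative in `y` of the derivative in `x`). -/
def pdxy (u : ℝ × ℝ → ℝ) (p : ℝ × ℝ) : ℝ := pdy (pdx u) p

/-- The open mesh cell `P_{i,j} = (x_{i-1}, x_i) × (y_{j-1}, y_j)`, where
`x_i = i·(X/N₁)`, `y_j = j·(Y/N₂)`. -/
def cellOp (X Y : ℝ) (N₁ N₂ : ℕ) (i j : ℕ) : Set (ℝ × ℝ) :=
  Ioo (((i : ℝ) - 1) * (X / N₁)) ((i : ℝ) * (X / N₁)) ×ˢ
    Ioo (((j : ℝ) - 1) * (Y / N₂)) ((j : ℝ) * (Y / N₂))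

/-- The closed mesh cell `P̄_{i,j} = [x_{i-1}, x_i] × [y_{j-1}, y_j]`. -/
def cellCl (X Y : ℝ) (N₁ N₂ : ℕ) (i j : ℕ) : Set (ℝ × ℝ) :=
  Icc (((i : ℝ) - 1) * (X / N₁)) ((i : ℝ) * (X / N₁)) ×ˢ
    Icc (((j : ℝ) - 1) * (Y / N₂)) ((j : ℝ) * (Y / N₂))

/-- The lower-left corner `(x_{i-1}, y_{j-1})` of the cell `P_{i,j}`. -/
def meshNode (X Y : ℝ) (N₁ N₂ : ℕ) (i j : ℕ) : ℝ × ℝ :=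
  (((i : ℝ) - 1) * (X / N₁), ((j : ℝ) - 1) * (Y / N₂))

/-- `h = √(h₁² + h₂²)`, with `h₁ = X/N₁`, `h₂ = Y/N₂`. -/
def meshH (X Y : ℝ) (N₁ N₂ : ℕ) : ℝ := Real.sqrt ((X / N₁) ^ 2 + (Y / N₂) ^ 2)

/-- The confluent hypergeometric function
`₀F₁(b; w) = Σ_{n=0}^∞ wⁿ / ((b)ₙ · n!)`, where `(b)ₙ = b(b+1)⋯(b+n−1)`. -/
def hyp0F1 (b w : ℝ) : ℝ :=
  ∑' n : ℕ, w ^ n / ((∏ m ∈ Finset.range n, (b + (m : ℝ))) * (n.factorial : ℝ))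

/-- `u` solves the Goursat problem `∂²u/∂x∂y + N(u)·u = f` on `D`,
`u(x,0) = ψ(x)`, `u(0,y) = φ(y)`, with the regularity stated in the paper. -/
structure GoursatSol (X Y : ℝ) (N : ℝ → ℝ) (f : ℝ × ℝ → ℝ) (ψ φ : ℝ → ℝ)
    (u : ℝ × ℝ → ℝ) : Prop where
  cont : ContinuousOn u (clD X Y)
  diffx : ∀ p ∈ opD X Y, DifferentiableAt ℝ (fun t => u (t, p.2)) p.1
  diffy : ∀ p ∈ opD X Y, DifferentiableAt ℝ (fun t => u (p.1, t)) p.2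
  diffxy : ∀ p ∈ opD X Y, DifferentiableAt ℝ (fun t => pdx u (p.1, t)) p.2
  contx : ContinuousOn (pdx u) (opD X Y)
  conty : ContinuousOn (pdy u) (opD X Y)
  contxy : ContinuousOn (pdxy u) (opD X Y)
  eqn : ∀ p ∈ opD X Y, pdxy u p + N (u p) * u p = f p
  bc1 : ∀ x ∈ Icc (0 : ℝ) X, u (x, 0) = ψ x
  bc2 : ∀ y ∈ Icc (0 : ℝ) Y, u (0, y) = φ y

/-- `u0` solves the basic problem: the Goursat problem with the nonlinear coefficient
frozen, on each open mesh cell `P_{i,j}`, at the value of the unknown at the lower-left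
corner of that cell. -/
structure BasicSol (X Y : ℝ) (N : ℝ → ℝ) (f : ℝ × ℝ → ℝ) (ψ φ : ℝ → ℝ)
    (N₁ N₂ : ℕ) (u0 : ℝ × ℝ → ℝ) : Prop where
  cont : ContinuousOn u0 (clD X Y)
  diffx : ∀ i ∈ Finset.Icc 1 N₁, ∀ j ∈ Finset.Icc 1 N₂, ∀ p ∈ cellOp X Y N₁ N₂ i j,
      DifferentiableAt ℝ (fun t => u0 (t, p.2)) p.1
  diffy : ∀ i ∈ Finset.Icc 1 N₁, ∀ j ∈ Finset.Icc 1 N₂, ∀ p ∈ cellOp X Y N₁ N₂ i j,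
      DifferentiableAt ℝ (fun t => u0 (p.1, t)) p.2
  diffxy : ∀ i ∈ Finset.Icc 1 N₁, ∀ j ∈ Finset.Icc 1 N₂, ∀ p ∈ cellOp X Y N₁ N₂ i j,
      DifferentiableAt ℝ (fun t => pdx u0 (p.1, t)) p.2
  contx : ∀ i ∈ Finset.Icc 1 N₁, ∀ j ∈ Finset.Icc 1 N₂,
      ContinuousOn (pdx u0) (cellOp X Y N₁ N₂ i j)
  conty : ∀ i ∈ Finset.Icc 1 N₁, ∀ j ∈ Finset.Icc 1 N₂,
      ContinuousOn (pdy u0) (cellOp X Y N₁ N₂ i j)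
  contxy : ∀ i ∈ Finset.Icc 1 N₁, ∀ j ∈ Finset.Icc 1 N₂,
      ContinuousOn (pdxy u0) (cellOp X Y N₁ N₂ i j)
  eqn : ∀ i ∈ Finset.Icc 1 N₁, ∀ j ∈ Finset.Icc 1 N₂, ∀ p ∈ cellOp X Y N₁ N₂ i j,
      pdxy u0 p + N (u0 (meshNode X Y N₁ N₂ i j)) * u0 p = f p
  bc1 : ∀ x ∈ Icc (0 : ℝ) X, u0 (x, 0) = ψ x
  bc2 : ∀ y ∈ Icc (0 : ℝ) Y, u0 (0, y) = φ y

/-- `‖z‖_{i,j} = sup_{P̄_{i,j}} |z|`, with the convention `‖z‖_{0,j} = ‖z‖_{i,0} = 0`. -/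
def znorm (X Y : ℝ) (N₁ N₂ : ℕ) (z : ℝ × ℝ → ℝ) (i j : ℕ) : ℝ :=
  if i = 0 ∨ j = 0 then 0 else ⨆ p ∈ cellCl X Y N₁ N₂ i j, |z p|

/-- `N_{i,j} = |N(u⁰(x_{i−1}, y_{j−1}))|`. -/
def coefN (X Y : ℝ) (N₁ N₂ : ℕ) (N : ℝ → ℝ) (u0 : ℝ × ℝ → ℝ) (i j : ℕ) : ℝ :=
  |N (u0 (meshNode X Y N₁ N₂ i j))|

/-- `L_{i,j} = sup_{(x,y) ∈ P̄_{i,j}, θ ∈ [0,1]} |𝓝′(u⁰_{i,j} − θ(u⁰_{i,j} − u(x,y)))|`,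
where `𝓝(v) = N(v)·v`. -/
def coefL (X Y : ℝ) (N₁ N₂ : ℕ) (N : ℝ → ℝ) (u u0 : ℝ × ℝ → ℝ) (i j : ℕ) : ℝ :=
  ⨆ p ∈ cellCl X Y N₁ N₂ i j, ⨆ θ ∈ Icc (0 : ℝ) 1,
    |deriv (fun v => N v * v)
      (u0 (meshNode X Y N₁ N₂ i j) - θ * (u0 (meshNode X Y N₁ N₂ i j) - u p))|

/-- `R_{i,j} = ₀F₁(1; N_{i,j}·h₁·h₂)`. -/
def coefR (X Y : ℝ) (N₁ N₂ : ℕ) (N : ℝ → ℝ) (u0 : ℝ × ℝ → ℝ) (i j : ℕ) : ℝ :=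
  hyp0F1 1 (coefN X Y N₁ N₂ N u0 i j * (X / N₁) * (Y / N₂))

/-- `R′_{i,j} = ₀F₁(2; N_{i,j}·h₁·h₂)·N_{i,j}`. -/
def coefR' (X Y : ℝ) (N₁ N₂ : ℕ) (N : ℝ → ℝ) (u0 : ℝ × ℝ → ℝ) (i j : ℕ) : ℝ :=
  hyp0F1 2 (coefN X Y N₁ N₂ N u0 i j * (X / N₁) * (Y / N₂)) * coefN X Y N₁ N₂ N u0 i j

/-- The constant
`A = √([sup|ψ′| + Y(sup|f| + N_α·sup|u|)]² + [sup|φ′| + X(sup|f| + N_α·sup|u|)]²)`,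
where `N_α = sup_{D̄} |N(u)|`. -/
def constA (X Y : ℝ) (N : ℝ → ℝ) (f : ℝ × ℝ → ℝ) (ψ φ : ℝ → ℝ) (u : ℝ × ℝ → ℝ) : ℝ :=
  Real.sqrt
    (((⨆ x ∈ Ioo (0 : ℝ) X, |deriv ψ x|) +
        Y * ((⨆ p ∈ clD X Y, |f p|) + (⨆ p ∈ clD X Y, |N (u p)|) * ⨆ p ∈ clD X Y, |u p|)) ^ 2 +
      ((⨆ y ∈ Ioo (0 : ℝ) Y, |deriv φ y|) +
        X * ((⨆ p ∈ clD X Y, |f p|) + (⨆ p ∈ clD X Y, |N (u p)|) * ⨆ p ∈ clD X Y, |u p|)) ^ 2)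

/-!
The error `z = u - u⁰` vanishes on the axes, and inside a cell with lower-left corner `P` and
diameter `h` it satisfies `|∂²z/∂x∂y| ≤ N |z| + (N + L) (h A + |z(P)|)`: the mixed derivative
`f - N(u) u` of `u` is bounded, so `u` varies by at most `h A` on the cell, and `L` bounds the
derivative of `v ↦ N(v) v` between `u⁰(P)` and `u`.

The increment of a function over a rectangle is dominated by that of any function whose mixed
derivative dominates in absolute value; this is a monotonicity argument in each variable and needs
no integration. Adding up these increments over the cells below controls `z` on the bottom edge of
a cell. On the cell itself, Picard iteration of the inequality above reproduces the series
`₀F₁(1; N (x - x_{i-1}) (y - y_{j-1}))` of the Riemann function, which gives the factor `R`, and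
comparing coefficients gives `R ≤ 1 + h₁ h₂ R'`.
-/

open Filter Topology

section Analysis

theorem monotoneOn_closure {α β : Type*} [LinearOrder α] [TopologicalSpace α]
    [OrderClosedTopology α] [Preorder β] [TopologicalSpace β] [OrderClosedTopology β]
    {g : α → β} {s : Set α} (hg : MonotoneOn g s) (hc : ContinuousOn g (closure s)) :
    MonotoneOn g (closure s) := by
  intro x hx y hy hxy
  rcases hxy.eq_or_lt with rfl | hlt
  · exact le_rfl
  have : (𝓝[s] x).NeBot := mem_closure_iff_nhdsWithin_neBot.1 hx
  have : (𝓝[s] y).NeBot := mem_closure_iff_nhdsWithin_neBot.1 hy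
  have h_lt : ∀ᶠ q in 𝓝[s] x ×ˢ 𝓝[s] y, q.1 < q.2 :=
    ((tendsto_id.mono_left nhdsWithin_le_nhds).comp tendsto_fst).eventually_lt
      ((tendsto_id.mono_left nhdsWithin_le_nhds).comp tendsto_snd) hlt
  refine le_of_tendsto_of_tendsto (((hc x hx).mono subset_closure).tendsto.comp tendsto_fst)
    (((hc y hy).mono subset_closure).tendsto.comp tendsto_snd) ?_
  filter_upwards [prod_mem_prod self_mem_nhdsWithin self_mem_nhdsWithin, h_lt] with q hq hq_lt
  exact hg hq.1 hq.2 hq_lt.le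

theorem le_biSup_of_bddAbove {α : Type*} {S : Set α} {F : α → ℝ} (hF : BddAbove (F '' S))
    {p : α} (hp : p ∈ S) : F p ≤ ⨆ q ∈ S, F q := by
  refine le_ciSup₂ (f := fun q (_ : q ∈ S) => F q) (hF.mono ?_) p hp
  rintro _ ⟨_, ⟨q, rfl⟩, hq, rfl⟩
  exact mem_image_of_mem F hq

theorem biSup_abs_nonneg {α : Type*} (S : Set α) (g : α → ℝ) : 0 ≤ ⨆ q ∈ S, |g q| :=
  Real.iSup_nonneg fun _ => Real.iSup_nonneg fun _ => abs_nonneg _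

theorem abs_le_biSup_abs {α : Type*} [TopologicalSpace α] {S : Set α} (hS : IsCompact S)
    {g : α → ℝ} (hg : ContinuousOn g S) {p : α} (hp : p ∈ S) : |g p| ≤ ⨆ q ∈ S, |g q| :=
  le_biSup_of_bddAbove (hS.bddAbove_image hg.abs) hp

theorem abs_sub_le_biSup_deriv_mul {g : ℝ → ℝ} {a b : ℝ} (hc : ContinuousOn g (Icc a b))
    (hd : ∀ x ∈ Ioo a b, DifferentiableAt ℝ g x)
    (hbdd : BddAbove ((fun x => |deriv g x|) '' Ioo a b)) {x y : ℝ} (hx : x ∈ Icc a b)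
    (hy : y ∈ Icc a b) (hxy : x ≤ y) :
    |g y - g x| ≤ (⨆ t ∈ Ioo a b, |deriv g t|) * (y - x) := by
  rcases hxy.eq_or_lt with rfl | hlt
  · simp
  have hsub : Ioo x y ⊆ Ioo a b := Ioo_subset_Ioo hx.1 hy.2
  obtain ⟨ξ, hξ, hslope⟩ := exists_deriv_eq_slope g hlt
    (hc.mono (Icc_subset_Icc hx.1 hy.2)) fun t ht => (hd t (hsub ht)).differentiableWithinAt
  have hle := le_biSup_of_bddAbove hbdd (hsub hξ)
  rwa [hslope, abs_div, abs_of_pos (sub_pos.2 hlt), div_le_iff₀ (sub_pos.2 hlt)] at hle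

theorem abs_sub_le_biSup_deriv_segment_mul {α : Type*} [TopologicalSpace α] {S : Set α}
    (hS : IsCompact S) {g : ℝ → ℝ} (hg : ContDiff ℝ 1 g) {v : α → ℝ} (hv : ContinuousOn v S)
    (c : ℝ) {p : α} (hp : p ∈ S) :
    |g c - g (v p)| ≤
      (⨆ q ∈ S, ⨆ θ ∈ Icc (0 : ℝ) 1, |deriv g (c - θ * (c - v q))|) * |v p - c| := by
  have hcont : ContinuousOn (fun q : α × ℝ => deriv g (c - q.2 * (c - v q.1)))
      (S ×ˢ Icc (0 : ℝ) 1) :=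
    (hg.continuous_deriv le_rfl).comp_continuousOn <| continuousOn_const.sub <|
      continuousOn_snd.mul <| continuousOn_const.sub <|
        hv.comp continuousOn_fst fun _ hq => hq.1
  obtain ⟨B, hB⟩ := (hS.prod isCompact_Icc).exists_bound_of_continuousOn hcont
  have hB_nonneg : 0 ≤ B := (norm_nonneg _).trans (hB (p, 0) ⟨hp, by simp⟩)
  have hderiv : ∀ θ ∈ Icc (0 : ℝ) 1, |deriv g (c - θ * (c - v p))| ≤
      ⨆ q ∈ S, ⨆ θ ∈ Icc (0 : ℝ) 1, |deriv g (c - θ * (c - v q))| := by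
    intro θ hθ
    refine (le_biSup_of_bddAbove (F := fun θ => |deriv g (c - θ * (c - v p))|) ⟨B, ?_⟩ hθ).trans
      (le_biSup_of_bddAbove (F := fun q => ⨆ θ ∈ Icc (0 : ℝ) 1, |deriv g (c - θ * (c - v q))|)
        ⟨B, ?_⟩ hp)
    · rintro _ ⟨θ', hθ', rfl⟩
      exact hB (p, θ') ⟨hp, hθ'⟩
    · rintro _ ⟨q, hq, rfl⟩
      exact Real.iSup_le (fun θ' => Real.iSup_le (fun hθ' => hB (q, θ') ⟨hq, hθ'⟩) hB_nonneg)
        hB_nonneg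
  rw [abs_sub_comm (v p) c]
  refine (convex_segment c (v p)).norm_image_sub_le_of_norm_deriv_le
    (fun t _ => hg.differentiable one_ne_zero t) ?_ (right_mem_segment ℝ _ _)
    (left_mem_segment ℝ _ _)
  rw [segment_eq_image']
  rintro _ ⟨θ, hθ, rfl⟩
  have hpoint : c + θ • (v p - c) = c - θ * (c - v p) := by rw [smul_eq_mul]; ring
  simpa only [hpoint, Real.norm_eq_abs] using hderiv θ hθ

theorem contDiff_of_forall_hasSum_pow {ν : ℕ → ℝ} {N : ℝ → ℝ}
    (hN : ∀ v : ℝ, HasSum (fun s : ℕ => ν s * v ^ s) (N v)) {n : WithTop ℕ∞} :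
    ContDiff ℝ n N := by
  have hradius : (FormalMultilinearSeries.ofScalars ℝ ν).radius = ⊤ := by
    refine ENNReal.eq_top_of_forall_nnreal_le fun r => ?_
    refine FormalMultilinearSeries.le_radius_of_tendsto (l := 0) _ ?_
    simpa [FormalMultilinearSeries.ofScalars_norm, abs_mul] using
      (hN r).summable.tendsto_atTop_zero.norm
  have hseries : HasFPowerSeriesOnBall N (FormalMultilinearSeries.ofScalars ℝ ν) 0 ⊤ :=
    ⟨hradius.ge, by simp, fun {y} _ => by
      simpa [FormalMultilinearSeries.ofScalars_apply_eq, mul_comm] using hN y⟩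
  have hanalytic : AnalyticOnNhd ℝ N univ := by
    simpa only [Metric.eball_top] using hseries.analyticOnNhd
  exact contDiffOn_univ.1 (hanalytic.contDiffOn uniqueDiffOn_univ)

end Analysis

section Hypergeometric

variable {b w : ℝ}

theorem one_le_prod_range_add (hb : 1 ≤ b) (n : ℕ) :
    1 ≤ ∏ m ∈ Finset.range n, (b + (m : ℝ)) :=
  Finset.one_le_prod fun m _ => hb.trans (le_add_of_nonneg_right m.cast_nonneg)

theorem summable_hyp0F1 (hb : 1 ≤ b) (w : ℝ) :
    Summable fun n : ℕ => w ^ n / ((∏ m ∈ Finset.range n, (b + (m : ℝ))) * (n.factorial : ℝ)) := by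
  refine .of_norm_bounded (Real.summable_pow_div_factorial |w|) fun n => ?_
  have hprod := one_le_prod_range_add hb n
  have hfac : (0 : ℝ) < n.factorial := by positivity
  rw [Real.norm_eq_abs, abs_div, abs_pow, abs_of_nonneg (a := _ * _) (by positivity)]
  gcongr
  exact le_mul_of_one_le_left hfac.le hprod

theorem hyp0F1_le_one_add (hb : 1 ≤ b) (hw : 0 ≤ w) :
    hyp0F1 b w ≤ 1 + w / b * hyp0F1 (b + 1) w := by
  have hterm (n : ℕ) :
      w ^ (n + 1) / ((∏ m ∈ Finset.range (n + 1), (b + (m : ℝ))) * ((n + 1).factorial : ℝ)) ≤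
        w / b * (w ^ n / ((∏ m ∈ Finset.range n, (b + 1 + (m : ℝ))) * (n.factorial : ℝ))) := by
    have hprod : ∏ m ∈ Finset.range (n + 1), (b + (m : ℝ)) =
        b * ∏ m ∈ Finset.range n, (b + 1 + (m : ℝ)) := by
      rw [Finset.prod_range_succ', mul_comm]
      simp [add_assoc, add_comm (1 : ℝ)]
    rw [div_mul_div_comm, ← pow_succ', hprod, mul_assoc]
    gcongr
    exact n.le_succ
  rw [hyp0F1, (summable_hyp0F1 hb w).tsum_eq_zero_add, hyp0F1, ← tsum_mul_left]
  have hsum := (summable_hyp0F1 (hb.trans (le_add_of_nonneg_right zero_le_one)) w).mul_left (w / b)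
  simpa using ((summable_nat_add_iff 1).2 (summable_hyp0F1 hb w)).tsum_le_tsum hterm hsum

theorem hasSum_hyp0F1_one (w : ℝ) :
    HasSum (fun n : ℕ => w ^ n / (n.factorial : ℝ) ^ 2) (hyp0F1 1 w) := by
  have hprod (n : ℕ) : ∏ m ∈ Finset.range n, (1 + (m : ℝ)) = n.factorial := by
    rw [← Finset.prod_range_add_one_eq_factorial]
    push_cast
    simp only [add_comm]
  simpa only [hyp0F1, hprod, sq] using (summable_hyp0F1 le_rfl w).hasSum

end Hypergeometric

section MixedDerivative

/-- `w` is continuous on the closed rectangle `[a, b] × [c, d]` and has the mixed derivative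
`∂/∂y (∂w/∂x) = w'` in its interior. The inner derivative `∂w/∂x` is kept existential, and neither
it nor `w'` is required to be continuous. -/
def HasMixedDerivOn (w w' : ℝ × ℝ → ℝ) (a b c d : ℝ) : Prop :=
  ContinuousOn w (Icc a b ×ˢ Icc c d) ∧ ∃ wx : ℝ × ℝ → ℝ, ∀ p ∈ Ioo a b ×ˢ Ioo c d,
    HasDerivAt (fun s => w (s, p.2)) (wx p) p.1 ∧ HasDerivAt (fun t => wx (p.1, t)) (w' p) p.2

/-- The increment of `w` over the rectangle `[a, b] × [c, d]`, which plays the role of the double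
integral of the mixed derivative of `w`. -/
def rectIncr (w : ℝ × ℝ → ℝ) (a b c d : ℝ) : ℝ := w (b, d) - w (a, d) - w (b, c) + w (a, c)

variable {v v' w w' : ℝ × ℝ → ℝ} {a b c d : ℝ}

namespace HasMixedDerivOn

theorem continuousOn (hw : HasMixedDerivOn w w' a b c d) :
    ContinuousOn w (Icc a b ×ˢ Icc c d) := hw.1

theorem mono (hw : HasMixedDerivOn w w' a b c d) {a₁ b₁ c₁ d₁ : ℝ} (ha : a ≤ a₁) (hb : b₁ ≤ b)
    (hc : c ≤ c₁) (hd : d₁ ≤ d) : HasMixedDerivOn w w' a₁ b₁ c₁ d₁ := by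
  obtain ⟨hcont, wx, hderiv⟩ := hw
  exact ⟨hcont.mono (prod_mono (Icc_subset_Icc ha hb) (Icc_subset_Icc hc hd)), wx,
    fun p hp => hderiv p (prod_mono (Ioo_subset_Ioo ha hb) (Ioo_subset_Ioo hc hd) hp)⟩

theorem add (hv : HasMixedDerivOn v v' a b c d) (hw : HasMixedDerivOn w w' a b c d) :
    HasMixedDerivOn (fun p => v p + w p) (fun p => v' p + w' p) a b c d := by
  obtain ⟨hv_cont, vx, hv_deriv⟩ := hv
  obtain ⟨hw_cont, wx, hw_deriv⟩ := hw
  exact ⟨hv_cont.add hw_cont, fun p => vx p + wx p, fun p hp =>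
    ⟨(hv_deriv p hp).1.add (hw_deriv p hp).1, (hv_deriv p hp).2.add (hw_deriv p hp).2⟩⟩

theorem const_mul (r : ℝ) (hw : HasMixedDerivOn w w' a b c d) :
    HasMixedDerivOn (fun p => r * w p) (fun p => r * w' p) a b c d := by
  obtain ⟨hcont, wx, hderiv⟩ := hw
  exact ⟨hcont.const_mul r, fun p => r * wx p, fun p hp =>
    ⟨(hderiv p hp).1.const_mul r, (hderiv p hp).2.const_mul r⟩⟩

theorem sub (hv : HasMixedDerivOn v v' a b c d) (hw : HasMixedDerivOn w w' a b c d) :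
    HasMixedDerivOn (fun p => v p - w p) (fun p => v' p - w' p) a b c d := by
  simpa only [neg_one_mul, ← sub_eq_add_neg] using hv.add (hw.const_mul (-1))

theorem sum {ι : Type*} {g g' : ι → ℝ × ℝ → ℝ} {S : Finset ι}
    (hg : ∀ k ∈ S, HasMixedDerivOn (g k) (g' k) a b c d) :
    HasMixedDerivOn (fun p => ∑ k ∈ S, g k p) (fun p => ∑ k ∈ S, g' k p) a b c d := by
  choose! hcont gx hderiv using hg
  exact ⟨continuousOn_finsetSum S hcont, fun p => ∑ k ∈ S, gx k p, fun p hp =>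
    ⟨.fun_sum fun k hk => (hderiv k hk p hp).1, .fun_sum fun k hk => (hderiv k hk p hp).2⟩⟩

end HasMixedDerivOn

theorem hasMixedDerivOn_fst_mul_snd {g h g' h' : ℝ → ℝ} (hg : ∀ s, HasDerivAt g (g' s) s)
    (hh : ∀ t, HasDerivAt h (h' t) t) :
    HasMixedDerivOn (fun p => g p.1 * h p.2) (fun p => g' p.1 * h' p.2) a b c d := by
  have hg_cont : Continuous g := continuous_iff_continuousAt.2 fun s => (hg s).continuousAt
  have hh_cont : Continuous h := continuous_iff_continuousAt.2 fun t => (hh t).continuousAt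
  exact ⟨by fun_prop, fun p => g' p.1 * h p.2, fun p _ =>
    ⟨(hg p.1).mul_const (h p.2), (hh p.2).const_mul (g' p.1)⟩⟩

namespace HasMixedDerivOn

theorem monotoneOn_sub_of_nonneg (hw : HasMixedDerivOn w w' a b c d)
    (hnonneg : ∀ p ∈ Ioo a b ×ˢ Ioo c d, 0 ≤ w' p) (hab : a ≤ b) :
    MonotoneOn (fun t => w (b, t) - w (a, t)) (Ioo c d) := by
  obtain ⟨hcont, wx, hderiv⟩ := hw
  have hwx_mono : ∀ s ∈ Ioo a b, MonotoneOn (fun t => wx (s, t)) (Ioo c d) := fun s hs =>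
    monotoneOn_of_hasDerivWithinAt_nonneg (convex_Ioo c d)
      (fun t ht => (hderiv (s, t) ⟨hs, ht⟩).2.continuousAt.continuousWithinAt)
      (fun t ht => (hderiv (s, t) ⟨hs, interior_subset ht⟩).2.hasDerivWithinAt)
      fun t ht => hnonneg (s, t) ⟨hs, interior_subset ht⟩
  have hcont_row : ∀ t ∈ Ioo c d, ContinuousOn (fun s => w (s, t)) (Icc a b) := fun t ht =>
    hcont.comp (f := fun s => (s, t)) (by fun_prop) fun s hs => ⟨hs, Ioo_subset_Icc_self ht⟩
  intro t ht t' ht' htt'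
  have hrow_mono : MonotoneOn (fun s => w (s, t') - w (s, t)) (Icc a b) := by
    refine monotoneOn_of_hasDerivWithinAt_nonneg (f' := fun s => wx (s, t') - wx (s, t))
      (convex_Icc a b) ((hcont_row t' ht').sub (hcont_row t ht)) ?_ ?_ <;> rw [interior_Icc]
    · exact fun s hs =>
        ((hderiv (s, t') ⟨hs, ht'⟩).1.sub (hderiv (s, t) ⟨hs, ht⟩).1).hasDerivWithinAt
    · exact fun s hs => sub_nonneg.2 (hwx_mono s hs ht ht' htt')
  have hends := hrow_mono (left_mem_Icc.2 hab) (right_mem_Icc.2 hab) hab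
  simp only at hends ⊢
  linarith

theorem rectIncr_nonneg (hw : HasMixedDerivOn w w' a b c d)
    (hnonneg : ∀ p ∈ Ioo a b ×ˢ Ioo c d, 0 ≤ w' p) (hab : a ≤ b) (hcd : c ≤ d) :
    0 ≤ rectIncr w a b c d := by
  rcases hcd.eq_or_lt with rfl | hlt
  · simp [rectIncr]
  have hcont_col : ∀ s ∈ Icc a b, ContinuousOn (fun t => w (s, t)) (Icc c d) := fun s hs =>
    hw.continuousOn.comp (f := fun t => (s, t)) (by fun_prop) fun t ht => ⟨hs, ht⟩
  have hmono := monotoneOn_closure (hw.monotoneOn_sub_of_nonneg hnonneg hab) <| by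
    rw [closure_Ioo hlt.ne]
    exact (hcont_col b (right_mem_Icc.2 hab)).sub (hcont_col a (left_mem_Icc.2 hab))
  rw [closure_Ioo hlt.ne] at hmono
  have hends := hmono (left_mem_Icc.2 hcd) (right_mem_Icc.2 hcd) hcd
  simp only at hends
  rw [rectIncr]
  linarith

theorem abs_rectIncr_le (hw : HasMixedDerivOn w w' a b c d) (hv : HasMixedDerivOn v v' a b c d)
    (hle : ∀ p ∈ Ioo a b ×ˢ Ioo c d, |w' p| ≤ v' p) (hab : a ≤ b) (hcd : c ≤ d) :
    |rectIncr w a b c d| ≤ rectIncr v a b c d := by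
  have hsub := (hv.sub hw).rectIncr_nonneg
    (fun p hp => sub_nonneg.2 (abs_le.1 (hle p hp)).2) hab hcd
  have hadd := (hv.add hw).rectIncr_nonneg
    (fun p hp => by linarith [(abs_le.1 (hle p hp)).1]) hab hcd
  simp only [rectIncr] at hsub hadd ⊢
  exact abs_le.2 ⟨by linarith, by linarith⟩

theorem abs_rectIncr_le_mul (hw : HasMixedDerivOn w w' a b c d) {M : ℝ}
    (hM : ∀ p ∈ Ioo a b ×ˢ Ioo c d, |w' p| ≤ M) (hab : a ≤ b) (hcd : c ≤ d) :
    |rectIncr w a b c d| ≤ M * (b - a) * (d - c) := by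
  have hv := (hasMixedDerivOn_fst_mul_snd (a := a) (b := b) (c := c) (d := d) hasDerivAt_id
    hasDerivAt_id).const_mul M
  refine (hw.abs_rectIncr_le hv (by simpa using hM) hab hcd).trans_eq ?_
  simp only [rectIncr, id]
  ring

theorem abs_sub_fst_le (hw : HasMixedDerivOn w w' a b c d) {M : ℝ}
    (hM : ∀ p ∈ Ioo a b ×ˢ Ioo c d, |w' p| ≤ M) {x x' y : ℝ} (hx : a ≤ x) (hxx' : x ≤ x')
    (hx' : x' ≤ b) (hy : y ∈ Icc c d) :
    |w (x', y) - w (x, y)| ≤ |w (x', c) - w (x, c)| + M * (x' - x) * (y - c) := by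
  have hincr := (hw.mono hx hx' le_rfl hy.2).abs_rectIncr_le_mul
    (fun p hp => hM p (prod_mono (Ioo_subset_Ioo hx hx') (Ioo_subset_Ioo_right hy.2) hp))
    hxx' hy.1
  calc |w (x', y) - w (x, y)| = |(w (x', c) - w (x, c)) + rectIncr w x x' c y| := by
        rw [rectIncr]; ring_nf
    _ ≤ _ := (abs_add_le _ _).trans (by gcongr)

theorem abs_sub_snd_le (hw : HasMixedDerivOn w w' a b c d) {M : ℝ}
    (hM : ∀ p ∈ Ioo a b ×ˢ Ioo c d, |w' p| ≤ M) {x y y' : ℝ} (hx : x ∈ Icc a b) (hy : c ≤ y)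
    (hyy' : y ≤ y') (hy' : y' ≤ d) :
    |w (x, y') - w (x, y)| ≤ |w (a, y') - w (a, y)| + M * (x - a) * (y' - y) := by
  have hincr := (hw.mono le_rfl hx.2 hy hy').abs_rectIncr_le_mul
    (fun p hp => hM p (prod_mono (Ioo_subset_Ioo_right hx.2) (Ioo_subset_Ioo hy hy') hp))
    hx.1 hyy'
  calc |w (x, y') - w (x, y)| = |(w (a, y') - w (a, y)) + rectIncr w a x y y'| := by
        rw [rectIncr]; ring_nf
    _ ≤ _ := (abs_add_le _ _).trans (by gcongr)

end HasMixedDerivOn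

theorem abs_sub_le_sum_of_hasMixedDerivOn {h : ℝ} (hh : 0 ≤ h) {E : ℕ → ℝ} {m : ℕ}
    (hw : ∀ s ∈ Finset.Icc 1 m, HasMixedDerivOn w w' a b (((s : ℝ) - 1) * h) (s * h))
    (hE : ∀ s ∈ Finset.Icc 1 m, ∀ p ∈ Ioo a b ×ˢ Ioo (((s : ℝ) - 1) * h) (s * h), |w' p| ≤ E s)
    (hw_bot : ∀ x ∈ Icc a b, w (x, 0) = 0) {x : ℝ} (hx : x ∈ Icc a b) :
    |w (x, m * h) - w (a, m * h)| ≤ (x - a) * (h * ∑ s ∈ Finset.Icc 1 m, E s) := by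
  induction m with
  | zero => simp [hw_bot x hx, hw_bot a (left_mem_Icc.2 (hx.1.trans hx.2))]
  | succ m ih =>
    have hsub : Finset.Icc 1 m ⊆ Finset.Icc 1 (m + 1) := Finset.Icc_subset_Icc_right m.le_succ
    have hlast : m + 1 ∈ Finset.Icc 1 (m + 1) := Finset.mem_Icc.2 ⟨m.succ_pos, le_rfl⟩
    have hprev := ih (fun s hs => hw s (hsub hs)) fun s hs => hE s (hsub hs)
    have hcell : ((m + 1 : ℕ) : ℝ) * h ∈ Icc ((((m + 1 : ℕ) : ℝ) - 1) * h) ((m + 1 : ℕ) * h) :=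
      right_mem_Icc.2 (by gcongr; linarith)
    have hstep := (hw _ hlast).abs_sub_fst_le (hE _ hlast) le_rfl hx.1 hx.2 hcell
    rw [show ((m + 1 : ℕ) : ℝ) - 1 = m by push_cast; ring] at hstep
    rw [Finset.sum_Icc_succ_top m.succ_pos]
    push_cast at hstep ⊢
    linarith

end MixedDerivative

section Gronwall

theorem hasDerivAt_sub_pow_div_factorial (a : ℝ) (k : ℕ) (s : ℝ) :
    HasDerivAt (fun s => (s - a) ^ (k + 1) / (k + 1).factorial) ((s - a) ^ k / k.factorial) s := by
  refine ((((hasDerivAt_id s).sub_const a).pow (k + 1)).div_const _).congr_deriv ?_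
  rw [Nat.factorial_succ]
  push_cast
  simp only [id]
  field_simp

/-- The `k`-th term of `₀F₁(1; n (x - a) (y - c))`, the Riemann function of
`∂²w/∂x∂y = n w` with corner `(a, c)`. -/
def riemannTerm (n a c : ℝ) (k : ℕ) (p : ℝ × ℝ) : ℝ :=
  n ^ k * ((p.1 - a) ^ k / k.factorial * ((p.2 - c) ^ k / k.factorial))

variable {w w' : ℝ × ℝ → ℝ} {a b c d n γ K Z : ℝ}

theorem hasMixedDerivOn_riemannTerm_succ (n a₀ c₀ : ℝ) (k : ℕ) :
    HasMixedDerivOn (riemannTerm n a₀ c₀ (k + 1)) (fun p => n * riemannTerm n a₀ c₀ k p)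
      a b c d := by
  have h := (hasMixedDerivOn_fst_mul_snd (a := a) (b := b) (c := c) (d := d)
    (hasDerivAt_sub_pow_div_factorial a₀ k)
    (hasDerivAt_sub_pow_div_factorial c₀ k)).const_mul (n ^ (k + 1))
  have hterm : (fun p => n * riemannTerm n a₀ c₀ k p) = fun p => n ^ (k + 1) *
      ((p.1 - a₀) ^ k / k.factorial * ((p.2 - c₀) ^ k / k.factorial)) := by
    funext p
    rw [riemannTerm]
    ring
  rw [hterm]
  exact h

theorem hasMixedDerivOn_picardMajorant (n a₀ c₀ C Z γ : ℝ) (m : ℕ) :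
    HasMixedDerivOn
      (fun p => C * ∑ k ∈ Finset.range m, riemannTerm n a₀ c₀ (k + 1) p +
        Z * riemannTerm n a₀ c₀ (m + 1) p + γ * ((p.1 - a₀) * (p.2 - c₀)))
      (fun p => n * (C * ∑ k ∈ Finset.range m, riemannTerm n a₀ c₀ k p +
        Z * riemannTerm n a₀ c₀ m p) + γ) a b c d := by
  have hsum := HasMixedDerivOn.sum (a := a) (b := b) (c := c) (d := d) (S := Finset.range m)
    fun k _ => hasMixedDerivOn_riemannTerm_succ n a₀ c₀ k
  have hγ := (hasMixedDerivOn_fst_mul_snd (a := a) (b := b) (c := c) (d := d)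
    (fun s => (hasDerivAt_id s).sub_const a₀) fun t => (hasDerivAt_id t).sub_const c₀).const_mul γ
  have hderiv : (fun p => n * (C * ∑ k ∈ Finset.range m, riemannTerm n a₀ c₀ k p +
      Z * riemannTerm n a₀ c₀ m p) + γ) = fun p =>
        C * ∑ k ∈ Finset.range m, n * riemannTerm n a₀ c₀ k p +
          Z * (n * riemannTerm n a₀ c₀ m p) + γ * (1 * 1) := by
    funext p
    rw [← Finset.mul_sum]
    ring
  rw [hderiv]
  exact ((hsum.const_mul C).add
    ((hasMixedDerivOn_riemannTerm_succ n a₀ c₀ m).const_mul Z)).add hγ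

theorem riemannTerm_le (hn : 0 ≤ n) (k : ℕ) {p : ℝ × ℝ} (hp : p ∈ Icc a b ×ˢ Icc c d) :
    riemannTerm n a c k p ≤ (n * (b - a) * (d - c)) ^ k / (k.factorial : ℝ) ^ 2 := by
  have hx : 0 ≤ p.1 - a := sub_nonneg.2 hp.1.1
  have hy : 0 ≤ p.2 - c := sub_nonneg.2 hp.2.1
  calc riemannTerm n a c k p = (n * (p.1 - a) * (p.2 - c)) ^ k / (k.factorial : ℝ) ^ 2 := by
        rw [riemannTerm, mul_pow, mul_pow]; ring
    _ ≤ _ := by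
        obtain ⟨⟨-, hxb⟩, -, hyd⟩ := hp
        have hab : 0 ≤ b - a := hx.trans (sub_le_sub_right hxb a)
        gcongr

theorem HasMixedDerivOn.abs_le_add_majorant (hw : HasMixedDerivOn w w' a b c d)
    {v v' : ℝ × ℝ → ℝ} (hv : HasMixedDerivOn v v' a b c d) (hv_left : ∀ t, v (a, t) = 0)
    (hv_bot : ∀ s, v (s, c) = 0) (hle : ∀ p ∈ Ioo a b ×ˢ Ioo c d, |w' p| ≤ v' p)
    {p : ℝ × ℝ} (hp : p ∈ Icc a b ×ˢ Icc c d) :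
    |w p| ≤ |w (a, p.2) + w (p.1, c) - w (a, c)| + v p := by
  have hincr := (hw.mono le_rfl hp.1.2 le_rfl hp.2.2).abs_rectIncr_le
    (hv.mono le_rfl hp.1.2 le_rfl hp.2.2)
    (fun q hq => hle q (prod_mono (Ioo_subset_Ioo_right hp.1.2) (Ioo_subset_Ioo_right hp.2.2) hq))
    hp.1.1 hp.2.1
  calc |w p| = |(w (a, p.2) + w (p.1, c) - w (a, c)) + rectIncr w a p.1 c p.2| := by
        rw [rectIncr]; ring_nf
    _ ≤ |w (a, p.2) + w (p.1, c) - w (a, c)| + rectIncr v a p.1 c p.2 :=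
        (abs_add_le _ _).trans (by gcongr)
    _ = _ := by simp only [rectIncr, hv_left, hv_bot, sub_zero, add_zero]

theorem HasMixedDerivOn.abs_le_sum_riemannTerm (hw : HasMixedDerivOn w w' a b c d) (hn : 0 ≤ n)
    (hγ : 0 ≤ γ) (hw' : ∀ p ∈ Ioo a b ×ˢ Ioo c d, |w' p| ≤ n * |w p| + γ)
    (hK : ∀ p ∈ Icc a b ×ˢ Icc c d, |w (a, p.2) + w (p.1, c) - w (a, c)| ≤ K)
    (hZ : ∀ p ∈ Icc a b ×ˢ Icc c d, |w p| ≤ Z) (m : ℕ) :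
    ∀ p ∈ Icc a b ×ˢ Icc c d, |w p| ≤ (K + γ * (b - a) * (d - c)) *
      ∑ k ∈ Finset.range m, riemannTerm n a c k p + Z * riemannTerm n a c m p := by
  set C := K + γ * (b - a) * (d - c)
  induction m with
  | zero => simpa [riemannTerm] using hZ
  | succ m ih =>
    intro p hp
    have hmajorant_deriv : ∀ q ∈ Ioo a b ×ˢ Ioo c d, |w' q| ≤
        n * (C * ∑ k ∈ Finset.range m, riemannTerm n a c k q + Z * riemannTerm n a c m q) + γ :=
      fun q hq => (hw' q hq).trans <| by
        gcongr
        exact ih q (prod_mono Ioo_subset_Icc_self Ioo_subset_Icc_self hq)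
    have hstep := hw.abs_le_add_majorant (hasMixedDerivOn_picardMajorant n a c C Z γ m)
      (by simp [riemannTerm]) (by simp [riemannTerm]) hmajorant_deriv hp
    have hγ_le : γ * ((p.1 - a) * (p.2 - c)) ≤ γ * (b - a) * (d - c) := by
      obtain ⟨⟨hx, hx'⟩, hy, hy'⟩ := hp
      rw [mul_assoc]
      gcongr
      exact sub_nonneg.2 (hx.trans hx')
    have hzero : riemannTerm n a c 0 p = 1 := by simp [riemannTerm]
    rw [Finset.sum_range_succ', hzero, mul_add, mul_one]
    linarith [hK p hp]

/-- Wendroff's two-dimensional Grönwall inequality. -/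
theorem HasMixedDerivOn.abs_le_mul_hyp0F1 (hw : HasMixedDerivOn w w' a b c d) (hn : 0 ≤ n)
    (hγ : 0 ≤ γ) (hw' : ∀ p ∈ Ioo a b ×ˢ Ioo c d, |w' p| ≤ n * |w p| + γ)
    (hK : ∀ p ∈ Icc a b ×ˢ Icc c d, |w (a, p.2) + w (p.1, c) - w (a, c)| ≤ K)
    {p : ℝ × ℝ} (hp : p ∈ Icc a b ×ˢ Icc c d) :
    |w p| ≤ (K + γ * (b - a) * (d - c)) * hyp0F1 1 (n * (b - a) * (d - c)) := by
  obtain ⟨Z, hZ⟩ := (isCompact_Icc.prod isCompact_Icc).exists_bound_of_continuousOn hw.continuousOn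
  have hab : 0 ≤ b - a := sub_nonneg.2 (hp.1.1.trans hp.1.2)
  have hcd : 0 ≤ d - c := sub_nonneg.2 (hp.2.1.trans hp.2.2)
  have hK_nonneg : 0 ≤ K := (abs_nonneg _).trans (hK p hp)
  have hZ_nonneg : 0 ≤ Z := (norm_nonneg _).trans (hZ p hp)
  have hsum := hasSum_hyp0F1_one (n * (b - a) * (d - c))
  have hpartial (m : ℕ) : |w p| ≤ (K + γ * (b - a) * (d - c)) *
      hyp0F1 1 (n * (b - a) * (d - c)) +
        Z * ((n * (b - a) * (d - c)) ^ m / (m.factorial : ℝ) ^ 2) := by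
    refine (hw.abs_le_sum_riemannTerm hn hγ hw' hK hZ m p hp).trans ?_
    gcongr
    · exact (Finset.sum_le_sum fun k _ => riemannTerm_le hn k hp).trans
        (sum_le_hasSum _ (fun k _ => by positivity) hsum)
    · exact riemannTerm_le hn m hp
  have hlim := (hsum.summable.tendsto_atTop_zero.const_mul Z).const_add
    ((K + γ * (b - a) * (d - c)) * hyp0F1 1 (n * (b - a) * (d - c)))
  rw [mul_zero, add_zero] at hlim
  exact ge_of_tendsto' hlim hpartial

end Gronwall

section GoursatLipschitz

variable {X Y : ℝ} {N : ℝ → ℝ} {f u : ℝ × ℝ → ℝ} {ψ φ : ℝ → ℝ}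

/-- The bound `sup |f| + sup |N(u)| * sup |u|` on the mixed derivative `f - N(u) u` of a solution of
the Goursat problem. -/
def sourceBound (X Y : ℝ) (N : ℝ → ℝ) (f u : ℝ × ℝ → ℝ) : ℝ :=
  (⨆ p ∈ clD X Y, |f p|) + (⨆ p ∈ clD X Y, |N (u p)|) * ⨆ p ∈ clD X Y, |u p|

theorem sourceBound_nonneg : 0 ≤ sourceBound X Y N f u :=
  add_nonneg (biSup_abs_nonneg _ _) (mul_nonneg (biSup_abs_nonneg _ _) (biSup_abs_nonneg _ _))

theorem isCompact_clD : IsCompact (clD X Y) := isCompact_Icc.prod isCompact_Icc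

theorem mul_add_mul_le_sqrt_mul_sqrt (a b c d : ℝ) :
    a * c + b * d ≤ √(a ^ 2 + b ^ 2) * √(c ^ 2 + d ^ 2) := by
  simpa using Real.sum_mul_le_sqrt_mul_sqrt Finset.univ ![a, b] ![c, d]

theorem constA_nonneg : 0 ≤ constA X Y N f ψ φ u := Real.sqrt_nonneg _

namespace GoursatSol

theorem hasMixedDerivOn (hu : GoursatSol X Y N f ψ φ u) : HasMixedDerivOn u (pdxy u) 0 X 0 Y :=
  ⟨hu.cont, pdx u, fun p hp => ⟨(hu.diffx p hp).hasDerivAt, (hu.diffxy p hp).hasDerivAt⟩⟩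

theorem abs_pdxy_le (hu : GoursatSol X Y N f ψ φ u) (hN : Continuous N)
    (hf : ContinuousOn f (clD X Y)) {p : ℝ × ℝ} (hp : p ∈ opD X Y) :
    |pdxy u p| ≤ sourceBound X Y N f u := by
  have hp' : p ∈ clD X Y := prod_mono Ioo_subset_Icc_self Ioo_subset_Icc_self hp
  have hNu := abs_le_biSup_abs isCompact_clD (hN.comp_continuousOn hu.cont) hp'
  rw [eq_sub_of_add_eq (hu.eqn p hp)]
  refine (abs_sub _ _).trans (add_le_add (abs_le_biSup_abs isCompact_clD hf hp') ?_)
  rw [abs_mul]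
  exact mul_le_mul hNu (abs_le_biSup_abs isCompact_clD hu.cont hp') (abs_nonneg _)
    (biSup_abs_nonneg _ _)

theorem abs_sub_le_mul_constA (hu : GoursatSol X Y N f ψ φ u) (hN : Continuous N)
    (hf : ContinuousOn f (clD X Y)) (hψc : ContinuousOn ψ (Icc 0 X))
    (hψd : ∀ x ∈ Ioo (0 : ℝ) X, DifferentiableAt ℝ ψ x)
    (hbψ : BddAbove ((fun x => |deriv ψ x|) '' Ioo 0 X)) (hφc : ContinuousOn φ (Icc 0 Y))
    (hφd : ∀ y ∈ Ioo (0 : ℝ) Y, DifferentiableAt ℝ φ y)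
    (hbφ : BddAbove ((fun y => |deriv φ y|) '' Ioo 0 Y)) {p q : ℝ × ℝ} (hp : p ∈ clD X Y)
    (hq : q ∈ clD X Y) (hpq : p ≤ q) :
    |u q - u p| ≤ √((q.1 - p.1) ^ 2 + (q.2 - p.2) ^ 2) * constA X Y N f ψ φ u := by
  obtain ⟨x, y⟩ := p
  obtain ⟨x', y'⟩ := q
  obtain ⟨hx, hy⟩ := hp
  obtain ⟨hx', hy'⟩ := hq
  obtain ⟨hxx', hyy'⟩ := hpq
  simp only at hx hy hx' hy' hxx' hyy' ⊢
  have hM := fun p hp => hu.abs_pdxy_le hN hf (p := p) hp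
  have hM_nonneg : 0 ≤ sourceBound X Y N f u := sourceBound_nonneg
  have hfst : |u (x', y') - u (x, y')| ≤
      (x' - x) * ((⨆ x ∈ Ioo 0 X, |deriv ψ x|) + Y * sourceBound X Y N f u) := by
    have hincr := hu.hasMixedDerivOn.abs_sub_fst_le hM hx.1 hxx' hx'.2 hy'
    rw [hu.bc1 x hx, hu.bc1 x' hx', sub_zero] at hincr
    have hψ := abs_sub_le_biSup_deriv_mul hψc hψd hbψ hx hx' hxx'
    have := mul_le_mul_of_nonneg_left hy'.2 (mul_nonneg hM_nonneg (sub_nonneg.2 hxx'))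
    linarith
  have hsnd : |u (x, y') - u (x, y)| ≤
      (y' - y) * ((⨆ y ∈ Ioo 0 Y, |deriv φ y|) + X * sourceBound X Y N f u) := by
    have hincr := hu.hasMixedDerivOn.abs_sub_snd_le hM hx hy.1 hyy' hy'.2
    rw [hu.bc2 y hy, hu.bc2 y' hy', sub_zero] at hincr
    have hφ := abs_sub_le_biSup_deriv_mul hφc hφd hbφ hy hy' hyy'
    have := mul_le_mul_of_nonneg_left hx.2 (mul_nonneg hM_nonneg (sub_nonneg.2 hyy'))
    linarith
  exact ((abs_sub_le _ (u (x, y')) _).trans (add_le_add hfst hsnd)).trans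
    (mul_add_mul_le_sqrt_mul_sqrt _ _ _ _)

end GoursatSol

end GoursatLipschitz

section Mesh

variable {X Y : ℝ} {N₁ N₂ i j : ℕ} {z : ℝ × ℝ → ℝ}

theorem Icc_mesh_subset {L : ℝ} (hL : 0 ≤ L) {n k : ℕ} (hk : k ∈ Finset.Icc 1 n) :
    Icc (((k : ℝ) - 1) * (L / n)) (k * (L / n)) ⊆ Icc 0 L := by
  obtain ⟨hk_one, hk_n⟩ := Finset.mem_Icc.1 hk
  have hn : (0 : ℝ) < n := by exact_mod_cast hk_one.trans hk_n
  refine Icc_subset_Icc (mul_nonneg (sub_nonneg.2 (by exact_mod_cast hk_one)) (by positivity)) ?_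
  calc (k : ℝ) * (L / n) ≤ n * (L / n) := by gcongr
    _ = L := mul_div_cancel₀ L hn.ne'

theorem cellOp_subset_cellCl : cellOp X Y N₁ N₂ i j ⊆ cellCl X Y N₁ N₂ i j :=
  prod_mono Ioo_subset_Icc_self Ioo_subset_Icc_self

theorem isCompact_cellCl : IsCompact (cellCl X Y N₁ N₂ i j) := isCompact_Icc.prod isCompact_Icc

theorem cellCl_subset_clD (hX : 0 ≤ X) (hY : 0 ≤ Y) (hi : i ∈ Finset.Icc 1 N₁)
    (hj : j ∈ Finset.Icc 1 N₂) : cellCl X Y N₁ N₂ i j ⊆ clD X Y :=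
  prod_mono (Icc_mesh_subset hX hi) (Icc_mesh_subset hY hj)

theorem cellOp_subset_opD (hX : 0 ≤ X) (hY : 0 ≤ Y) (hi : i ∈ Finset.Icc 1 N₁)
    (hj : j ∈ Finset.Icc 1 N₂) : cellOp X Y N₁ N₂ i j ⊆ opD X Y := by
  have h := interior_mono (cellCl_subset_clD hX hY hi hj)
  rwa [cellCl, clD, interior_prod_eq, interior_prod_eq, interior_Icc, interior_Icc, interior_Icc,
    interior_Icc] at h

theorem sub_one_mul_le_mul {h : ℝ} (hh : 0 ≤ h) (k : ℕ) : ((k : ℝ) - 1) * h ≤ k * h := by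
  gcongr
  linarith

theorem meshNode_mem_cellCl (hX : 0 ≤ X) (hY : 0 ≤ Y) :
    meshNode X Y N₁ N₂ i j ∈ cellCl X Y N₁ N₂ i j :=
  ⟨left_mem_Icc.2 (sub_one_mul_le_mul (by positivity) i),
    left_mem_Icc.2 (sub_one_mul_le_mul (by positivity) j)⟩

theorem znorm_nonneg : 0 ≤ znorm X Y N₁ N₂ z i j := by
  rw [znorm]
  split_ifs
  exacts [le_rfl, biSup_abs_nonneg _ _]

theorem abs_le_znorm (hi : i ≠ 0) (hj : j ≠ 0) (hz : ContinuousOn z (cellCl X Y N₁ N₂ i j))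
    {p : ℝ × ℝ} (hp : p ∈ cellCl X Y N₁ N₂ i j) : |z p| ≤ znorm X Y N₁ N₂ z i j := by
  rw [znorm, if_neg (not_or.2 ⟨hi, hj⟩)]
  exact abs_le_biSup_abs isCompact_cellCl hz hp

theorem znorm_le {B : ℝ} (hB : 0 ≤ B) (hz : ∀ p ∈ cellCl X Y N₁ N₂ i j, |z p| ≤ B) :
    znorm X Y N₁ N₂ z i j ≤ B := by
  rw [znorm]
  split_ifs
  exacts [hB, Real.iSup_le (fun p => Real.iSup_le (hz p) hB) hB]

theorem abs_left_edge_le_znorm (hX : 0 ≤ X) (hY : 0 ≤ Y) (hz : ContinuousOn z (clD X Y))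
    (hz_left : ∀ y ∈ Icc 0 Y, z (0, y) = 0) (hi : i ∈ Finset.Icc 1 N₁)
    (hj : j ∈ Finset.Icc 1 N₂) {y : ℝ}
    (hy : y ∈ Icc (((j : ℝ) - 1) * (Y / N₂)) (j * (Y / N₂))) :
    |z (((i : ℝ) - 1) * (X / N₁), y)| ≤ znorm X Y N₁ N₂ z (i - 1) j := by
  obtain ⟨hi_one, hi_le⟩ := Finset.mem_Icc.1 hi
  rcases hi_one.eq_or_lt with rfl | hi_lt
  · simp [hz_left y (Icc_mesh_subset hY hj hy), znorm]
  have hi' : i - 1 ∈ Finset.Icc 1 N₁ := Finset.mem_Icc.2 ⟨by omega, by omega⟩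
  have hcast : ((i : ℝ) - 1) = ((i - 1 : ℕ) : ℝ) := by push_cast [hi_one]; rfl
  rw [hcast]
  exact abs_le_znorm (by omega) (Nat.one_le_iff_ne_zero.1 (Finset.mem_Icc.1 hj).1)
    (hz.mono (cellCl_subset_clD hX hY hi' hj))
    ⟨right_mem_Icc.2 (sub_one_mul_le_mul (by positivity) _), hy⟩

theorem abs_meshNode_le_znorm (hX : 0 ≤ X) (hY : 0 ≤ Y) (hz : ContinuousOn z (clD X Y))
    (hz_bot : ∀ x ∈ Icc 0 X, z (x, 0) = 0) (hi : i ∈ Finset.Icc 1 N₁)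
    (hj : j ∈ Finset.Icc 1 N₂) :
    |z (meshNode X Y N₁ N₂ i j)| ≤ znorm X Y N₁ N₂ z i (j - 1) := by
  obtain ⟨hj_one, hj_le⟩ := Finset.mem_Icc.1 hj
  have hx := left_mem_Icc.2 (sub_one_mul_le_mul (div_nonneg hX N₁.cast_nonneg) i)
  rcases hj_one.eq_or_lt with rfl | hj_lt
  · simp [meshNode, hz_bot _ (Icc_mesh_subset hX hi hx), znorm]
  have hj' : j - 1 ∈ Finset.Icc 1 N₂ := Finset.mem_Icc.2 ⟨by omega, by omega⟩
  have hcast : ((j : ℝ) - 1) = ((j - 1 : ℕ) : ℝ) := by push_cast [hj_one]; rfl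
  rw [meshNode, hcast]
  exact abs_le_znorm (Nat.one_le_iff_ne_zero.1 (Finset.mem_Icc.1 hi).1) (by omega)
    (hz.mono (cellCl_subset_clD hX hY hi hj'))
    ⟨hx, right_mem_Icc.2 (sub_one_mul_le_mul (by positivity) _)⟩

theorem abs_le_mul_hyp0F1_of_mesh {z' : ℝ × ℝ → ℝ} {n γ : ℝ} {E : ℕ → ℝ} (hX : 0 ≤ X)
    (hY : 0 ≤ Y) (hz : ContinuousOn z (clD X Y)) (hz_bot : ∀ x ∈ Icc 0 X, z (x, 0) = 0)
    (hz_left : ∀ y ∈ Icc 0 Y, z (0, y) = 0) (hi : i ∈ Finset.Icc 1 N₁)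
    (hj : j ∈ Finset.Icc 1 N₂)
    (hz' : ∀ s ∈ Finset.Icc 1 j, HasMixedDerivOn z z' (((i : ℝ) - 1) * (X / N₁)) (i * (X / N₁))
      (((s : ℝ) - 1) * (Y / N₂)) (s * (Y / N₂)))
    (hE_nonneg : ∀ s, 0 ≤ E s)
    (hE : ∀ s ∈ Finset.Icc 1 (j - 1), ∀ p ∈ cellOp X Y N₁ N₂ i s, |z' p| ≤ E s)
    (hn : 0 ≤ n) (hγ : 0 ≤ γ) (hz'_cell : ∀ p ∈ cellOp X Y N₁ N₂ i j, |z' p| ≤ n * |z p| + γ)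
    {p : ℝ × ℝ} (hp : p ∈ cellCl X Y N₁ N₂ i j) :
    |z p| ≤ (znorm X Y N₁ N₂ z (i - 1) j +
      X / N₁ * (Y / N₂ * ∑ s ∈ Finset.Icc 1 (j - 1), E s) + γ * (X / N₁) * (Y / N₂)) *
        hyp0F1 1 (n * (X / N₁) * (Y / N₂)) := by
  have hj_one : 1 ≤ j := (Finset.mem_Icc.1 hj).1
  have hwidth (k : ℕ) (h : ℝ) : k * h - ((k : ℝ) - 1) * h = h := by ring
  have hsum_nonneg : 0 ≤ Y / N₂ * ∑ s ∈ Finset.Icc 1 (j - 1), E s :=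
    mul_nonneg (by positivity) (Finset.sum_nonneg fun s _ => hE_nonneg s)
  have hboundary : ∀ q ∈ cellCl X Y N₁ N₂ i j,
      |z (((i : ℝ) - 1) * (X / N₁), q.2) + z (q.1, ((j : ℝ) - 1) * (Y / N₂)) -
        z (((i : ℝ) - 1) * (X / N₁), ((j : ℝ) - 1) * (Y / N₂))| ≤
      znorm X Y N₁ N₂ z (i - 1) j +
        X / N₁ * (Y / N₂ * ∑ s ∈ Finset.Icc 1 (j - 1), E s) := by
    intro q hq
    have hleft := abs_left_edge_le_znorm hX hY hz hz_left hi hj hq.2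
    have hbot := abs_sub_le_sum_of_hasMixedDerivOn (div_nonneg hY N₂.cast_nonneg)
      (fun s hs => hz' s (Finset.Icc_subset_Icc_right (j.sub_le 1) hs)) hE
      (fun x hx => hz_bot x (Icc_mesh_subset hX hi hx)) hq.1
    rw [Nat.cast_sub hj_one, Nat.cast_one] at hbot
    rw [add_sub_assoc]
    refine (abs_add_le _ _).trans (add_le_add hleft (hbot.trans ?_))
    gcongr
    linarith [hq.1.2, hwidth i (X / N₁)]
  simpa only [hwidth] using (hz' j (Finset.mem_Icc.2 ⟨hj_one, le_rfl⟩)).abs_le_mul_hyp0F1 hn hγ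
    hz'_cell hboundary hp

end Mesh

section Error

variable {X Y : ℝ} {N₁ N₂ i j : ℕ} {N : ℝ → ℝ} {f u u0 : ℝ × ℝ → ℝ} {ψ φ : ℝ → ℝ} {A : ℝ}

theorem coefN_nonneg : 0 ≤ coefN X Y N₁ N₂ N u0 i j := abs_nonneg _

theorem coefL_nonneg : 0 ≤ coefL X Y N₁ N₂ N u u0 i j :=
  Real.iSup_nonneg fun _ => Real.iSup_nonneg fun _ => biSup_abs_nonneg _ _

theorem coefR_le_one_add (hX : 0 ≤ X) (hY : 0 ≤ Y) :
    coefR X Y N₁ N₂ N u0 i j ≤ 1 + X / N₁ * (Y / N₂) * coefR' X Y N₁ N₂ N u0 i j := by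
  have hN : 0 ≤ coefN X Y N₁ N₂ N u0 i j := coefN_nonneg
  refine (hyp0F1_le_one_add le_rfl (by positivity)).trans_eq ?_
  rw [coefR', div_one, one_add_one_eq_two]
  ring

theorem GoursatSol.abs_sub_meshNode_le (hu : GoursatSol X Y N f ψ φ u) (hX : 0 ≤ X) (hY : 0 ≤ Y)
    (hN : Continuous N) (hf : ContinuousOn f (clD X Y)) (hψc : ContinuousOn ψ (Icc 0 X))
    (hψd : ∀ x ∈ Ioo (0 : ℝ) X, DifferentiableAt ℝ ψ x)
    (hbψ : BddAbove ((fun x => |deriv ψ x|) '' Ioo 0 X)) (hφc : ContinuousOn φ (Icc 0 Y))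
    (hφd : ∀ y ∈ Ioo (0 : ℝ) Y, DifferentiableAt ℝ φ y)
    (hbφ : BddAbove ((fun y => |deriv φ y|) '' Ioo 0 Y)) (hi : i ∈ Finset.Icc 1 N₁)
    (hj : j ∈ Finset.Icc 1 N₂) {p : ℝ × ℝ} (hp : p ∈ cellCl X Y N₁ N₂ i j) :
    |u p - u (meshNode X Y N₁ N₂ i j)| ≤ meshH X Y N₁ N₂ * constA X Y N f ψ φ u := by
  have hsub := cellCl_subset_clD hX hY hi hj
  refine (hu.abs_sub_le_mul_constA hN hf hψc hψd hbψ hφc hφd hbφ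
    (hsub (meshNode_mem_cellCl hX hY)) (hsub hp) ⟨hp.1.1, hp.2.1⟩).trans ?_
  obtain ⟨⟨hx, hx'⟩, hy, hy'⟩ := hp
  simp only [meshNode, meshH]
  gcongr
  · exact Real.sqrt_nonneg _
  · linarith
  · linarith

theorem BasicSol.hasMixedDerivOn (hu0 : BasicSol X Y N f ψ φ N₁ N₂ u0) (hX : 0 ≤ X) (hY : 0 ≤ Y)
    (hi : i ∈ Finset.Icc 1 N₁) (hj : j ∈ Finset.Icc 1 N₂) :
    HasMixedDerivOn u0 (pdxy u0) (((i : ℝ) - 1) * (X / N₁)) (i * (X / N₁))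
      (((j : ℝ) - 1) * (Y / N₂)) (j * (Y / N₂)) :=
  ⟨hu0.cont.mono (cellCl_subset_clD hX hY hi hj), pdx u0, fun p hp =>
    ⟨(hu0.diffx i hi j hj p hp).hasDerivAt, (hu0.diffxy i hi j hj p hp).hasDerivAt⟩⟩

theorem hasMixedDerivOn_error (hu : GoursatSol X Y N f ψ φ u)
    (hu0 : BasicSol X Y N f ψ φ N₁ N₂ u0) (hX : 0 ≤ X) (hY : 0 ≤ Y)
    (hi : i ∈ Finset.Icc 1 N₁) (hj : j ∈ Finset.Icc 1 N₂) :
    HasMixedDerivOn (fun p => u p - u0 p) (fun p => pdxy u p - pdxy u0 p)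
      (((i : ℝ) - 1) * (X / N₁)) (i * (X / N₁)) (((j : ℝ) - 1) * (Y / N₂)) (j * (Y / N₂)) := by
  obtain ⟨ha, hb⟩ := (Icc_subset_Icc_iff (sub_one_mul_le_mul (by positivity) i)).1
    (Icc_mesh_subset hX hi)
  obtain ⟨hc, hd⟩ := (Icc_subset_Icc_iff (sub_one_mul_le_mul (by positivity) j)).1
    (Icc_mesh_subset hY hj)
  exact (hu.hasMixedDerivOn.mono ha hb hc hd).sub (hu0.hasMixedDerivOn hX hY hi hj)

theorem abs_pdxy_error_le (hu : GoursatSol X Y N f ψ φ u)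
    (hu0 : BasicSol X Y N f ψ φ N₁ N₂ u0) (hX : 0 ≤ X) (hY : 0 ≤ Y) (hN : ContDiff ℝ 1 N)
    (hi : i ∈ Finset.Icc 1 N₁) (hj : j ∈ Finset.Icc 1 N₂) {p : ℝ × ℝ}
    (hp : p ∈ cellOp X Y N₁ N₂ i j) :
    |pdxy u p - pdxy u0 p| ≤ coefN X Y N₁ N₂ N u0 i j * |u p - u0 p| +
      (coefN X Y N₁ N₂ N u0 i j + coefL X Y N₁ N₂ N u u0 i j) *
        |u p - u0 (meshNode X Y N₁ N₂ i j)| := by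
  set c := u0 (meshNode X Y N₁ N₂ i j)
  have hL : |N c * c - N (u p) * u p| ≤ coefL X Y N₁ N₂ N u u0 i j * |u p - c| :=
    abs_sub_le_biSup_deriv_segment_mul isCompact_cellCl (hN.mul contDiff_id)
      (hu.cont.mono (cellCl_subset_clD hX hY hi hj)) c (cellOp_subset_cellCl hp)
  have hsplit : pdxy u p - pdxy u0 p =
      -(N c * (u p - u0 p)) + N c * (u p - c) + (N c * c - N (u p) * u p) := by
    linarith [hu.eqn p (cellOp_subset_opD hX hY hi hj hp), hu0.eqn i hi j hj p hp]
  calc |pdxy u p - pdxy u0 p|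
      ≤ |N c| * |u p - u0 p| + |N c| * |u p - c| + |N c * c - N (u p) * u p| := by
        rw [hsplit]
        refine (abs_add_three _ _ _).trans_eq ?_
        rw [abs_neg, abs_mul, abs_mul]
    _ ≤ |N c| * |u p - u0 p| + |N c| * |u p - c| + coefL X Y N₁ N₂ N u u0 i j * |u p - c| := by
        gcongr
    _ = _ := by rw [coefN]; ring

/-- The bound `(2 N_{i,s} + L_{i,s}) ‖z‖_{i,s} + h (N_{i,s} + L_{i,s}) A` on the mixed derivative of
the error `z = u - u⁰` in the cell `P_{i,s}`. -/
def residualBound (X Y : ℝ) (N₁ N₂ : ℕ) (N : ℝ → ℝ) (u u0 : ℝ × ℝ → ℝ) (A : ℝ) (i s : ℕ) : ℝ :=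
  (2 * coefN X Y N₁ N₂ N u0 i s + coefL X Y N₁ N₂ N u u0 i s) *
      znorm X Y N₁ N₂ (fun p => u p - u0 p) i s +
    meshH X Y N₁ N₂ * (coefN X Y N₁ N₂ N u0 i s + coefL X Y N₁ N₂ N u u0 i s) * A

theorem residualBound_nonneg (hA : 0 ≤ A) : 0 ≤ residualBound X Y N₁ N₂ N u u0 A i j :=
  add_nonneg
    (mul_nonneg (add_nonneg (mul_nonneg zero_le_two coefN_nonneg) coefL_nonneg) znorm_nonneg)
    (mul_nonneg (mul_nonneg (Real.sqrt_nonneg _) (add_nonneg coefN_nonneg coefL_nonneg)) hA)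

theorem abs_pdxy_error_le_add (hu : GoursatSol X Y N f ψ φ u)
    (hu0 : BasicSol X Y N f ψ φ N₁ N₂ u0) (hX : 0 ≤ X) (hY : 0 ≤ Y) (hN : ContDiff ℝ 1 N)
    (hi : i ∈ Finset.Icc 1 N₁) (hj : j ∈ Finset.Icc 1 N₂) {p : ℝ × ℝ}
    (hp : p ∈ cellOp X Y N₁ N₂ i j) {δ ζ : ℝ} (hδ : |u p - u (meshNode X Y N₁ N₂ i j)| ≤ δ)
    (hζ : |u (meshNode X Y N₁ N₂ i j) - u0 (meshNode X Y N₁ N₂ i j)| ≤ ζ) :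
    |pdxy u p - pdxy u0 p| ≤ coefN X Y N₁ N₂ N u0 i j * |u p - u0 p| +
      (coefN X Y N₁ N₂ N u0 i j + coefL X Y N₁ N₂ N u u0 i j) * (δ + ζ) := by
  refine (abs_pdxy_error_le hu hu0 hX hY hN hi hj hp).trans (add_le_add_right ?_ _)
  exact mul_le_mul_of_nonneg_left ((abs_sub_le _ _ _).trans (add_le_add hδ hζ))
    (add_nonneg coefN_nonneg coefL_nonneg)

theorem abs_pdxy_error_le_residualBound (hu : GoursatSol X Y N f ψ φ u)
    (hu0 : BasicSol X Y N f ψ φ N₁ N₂ u0) (hX : 0 ≤ X) (hY : 0 ≤ Y) (hN : ContDiff ℝ 1 N)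
    (hi : i ∈ Finset.Icc 1 N₁) (hj : j ∈ Finset.Icc 1 N₂) {p : ℝ × ℝ}
    (hp : p ∈ cellOp X Y N₁ N₂ i j)
    (hA : |u p - u (meshNode X Y N₁ N₂ i j)| ≤ meshH X Y N₁ N₂ * A) :
    |pdxy u p - pdxy u0 p| ≤ residualBound X Y N₁ N₂ N u u0 A i j := by
  have hz : ContinuousOn (fun p => u p - u0 p) (cellCl X Y N₁ N₂ i j) :=
    (hu.cont.sub hu0.cont).mono (cellCl_subset_clD hX hY hi hj)
  have hi0 : i ≠ 0 := Nat.one_le_iff_ne_zero.1 (Finset.mem_Icc.1 hi).1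
  have hj0 : j ≠ 0 := Nat.one_le_iff_ne_zero.1 (Finset.mem_Icc.1 hj).1
  have hp_le : coefN X Y N₁ N₂ N u0 i j * |u p - u0 p| ≤
      coefN X Y N₁ N₂ N u0 i j * znorm X Y N₁ N₂ (fun p => u p - u0 p) i j :=
    mul_le_mul_of_nonneg_left (abs_le_znorm hi0 hj0 hz (cellOp_subset_cellCl hp)) coefN_nonneg
  refine (abs_pdxy_error_le_add hu hu0 hX hY hN hi hj hp hA
    (abs_le_znorm hi0 hj0 hz (meshNode_mem_cellCl hX hY))).trans ?_
  rw [residualBound]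
  linarith

theorem znorm_error_le (hu : GoursatSol X Y N f ψ φ u) (hu0 : BasicSol X Y N f ψ φ N₁ N₂ u0)
    (hX : 0 ≤ X) (hY : 0 ≤ Y) (hN : ContDiff ℝ 1 N) (hA_nonneg : 0 ≤ A)
    (hi : i ∈ Finset.Icc 1 N₁) (hj : j ∈ Finset.Icc 1 N₂)
    (hA : ∀ s ∈ Finset.Icc 1 N₂, ∀ p ∈ cellCl X Y N₁ N₂ i s,
      |u p - u (meshNode X Y N₁ N₂ i s)| ≤ meshH X Y N₁ N₂ * A) :
    znorm X Y N₁ N₂ (fun p => u p - u0 p) i j ≤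
      (znorm X Y N₁ N₂ (fun p => u p - u0 p) (i - 1) j +
        X / N₁ * (Y / N₂ * ∑ s ∈ Finset.Icc 1 (j - 1), residualBound X Y N₁ N₂ N u u0 A i s) +
        (coefN X Y N₁ N₂ N u0 i j + coefL X Y N₁ N₂ N u u0 i j) *
          (meshH X Y N₁ N₂ * A + znorm X Y N₁ N₂ (fun p => u p - u0 p) i (j - 1)) *
          (X / N₁) * (Y / N₂)) * coefR X Y N₁ N₂ N u0 i j := by
  have hz : ContinuousOn (fun p => u p - u0 p) (clD X Y) := hu.cont.sub hu0.cont
  have hz_bot : ∀ x ∈ Icc 0 X, u (x, 0) - u0 (x, 0) = 0 := fun x hx => by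
    rw [hu.bc1 x hx, hu0.bc1 x hx, sub_self]
  have hz_left : ∀ y ∈ Icc 0 Y, u (0, y) - u0 (0, y) = 0 := fun y hy => by
    rw [hu.bc2 y hy, hu0.bc2 y hy, sub_self]
  have hsub : Finset.Icc 1 j ⊆ Finset.Icc 1 N₂ :=
    Finset.Icc_subset_Icc_right (Finset.mem_Icc.1 hj).2
  have hγ : 0 ≤ (coefN X Y N₁ N₂ N u0 i j + coefL X Y N₁ N₂ N u u0 i j) *
      (meshH X Y N₁ N₂ * A + znorm X Y N₁ N₂ (fun p => u p - u0 p) i (j - 1)) :=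
    mul_nonneg (add_nonneg coefN_nonneg coefL_nonneg)
      (add_nonneg (mul_nonneg (Real.sqrt_nonneg _) hA_nonneg) znorm_nonneg)
  have hcell := fun p hp => abs_le_mul_hyp0F1_of_mesh (p := p) hX hY hz hz_bot hz_left hi hj
    (fun s hs => hasMixedDerivOn_error hu hu0 hX hY hi (hsub hs))
    (fun s => residualBound_nonneg hA_nonneg)
    (fun s hs p hp =>
      have hs' := hsub (Finset.Icc_subset_Icc_right (j.sub_le 1) hs)
      abs_pdxy_error_le_residualBound hu hu0 hX hY hN hi hs' hp
        (hA s hs' p (cellOp_subset_cellCl hp)))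
    coefN_nonneg hγ
    (fun p hp => abs_pdxy_error_le_add hu hu0 hX hY hN hi hj hp
      (hA j hj p (cellOp_subset_cellCl hp)) (abs_meshNode_le_znorm hX hY hz hz_bot hi hj)) hp
  exact znorm_le ((abs_nonneg _).trans (hcell _ (meshNode_mem_cellCl hX hY))) hcell

end Error

theorem z_norm_first_inequality_general
    (X Y : ℝ) (hX : 0 < X) (hY : 0 < Y) (N : ℝ → ℝ) (hN : ContDiff ℝ 1 N)
    (f : ℝ × ℝ → ℝ) (hf : ContinuousOn f (clD X Y)) (ψ φ : ℝ → ℝ)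
    (hψc : ContinuousOn ψ (Icc 0 X))
    (hψd : ∀ x ∈ Ioo (0 : ℝ) X, DifferentiableAt ℝ ψ x)
    (hφc : ContinuousOn φ (Icc 0 Y))
    (hφd : ∀ y ∈ Ioo (0 : ℝ) Y, DifferentiableAt ℝ φ y)
    (N₁ N₂ : ℕ) (u : ℝ × ℝ → ℝ) (hu : GoursatSol X Y N f ψ φ u)
    (hbψ : BddAbove ((fun x => |deriv ψ x|) '' Ioo 0 X))
    (hbφ : BddAbove ((fun y => |deriv φ y|) '' Ioo 0 Y))
    (u0 : ℝ × ℝ → ℝ) (hu0 : BasicSol X Y N f ψ φ N₁ N₂ u0) :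
    ∀ i ∈ Finset.Icc 1 N₁, ∀ j ∈ Finset.Icc 1 N₂,
      znorm X Y N₁ N₂ (fun p => u p - u0 p) i j ≤
        znorm X Y N₁ N₂ (fun p => u p - u0 p) (i - 1) j *
            (1 + (X / N₁) * (Y / N₂) * coefR' X Y N₁ N₂ N u0 i j) +
          (X / N₁) * coefR X Y N₁ N₂ N u0 i j *
            ((Y / N₂) * ∑ s ∈ Finset.Icc 1 (j - 1),
              ((2 * coefN X Y N₁ N₂ N u0 i s + coefL X Y N₁ N₂ N u u0 i s) *
                  znorm X Y N₁ N₂ (fun p => u p - u0 p) i s +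
                meshH X Y N₁ N₂ *
                  (coefN X Y N₁ N₂ N u0 i s + coefL X Y N₁ N₂ N u u0 i s) *
                  constA X Y N f ψ φ u)) +
          (X / N₁) * (Y / N₂) * coefR X Y N₁ N₂ N u0 i j *
            (coefL X Y N₁ N₂ N u u0 i j + coefN X Y N₁ N₂ N u0 i j) *
            znorm X Y N₁ N₂ (fun p => u p - u0 p) i (j - 1) +
          (X / N₁) * (Y / N₂) * meshH X Y N₁ N₂ * coefR X Y N₁ N₂ N u0 i j *
            (coefN X Y N₁ N₂ N u0 i j + coefL X Y N₁ N₂ N u u0 i j) *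
            constA X Y N f ψ φ u := by
  intro i hi j hj
  have hlip : ∀ s ∈ Finset.Icc 1 N₂, ∀ p ∈ cellCl X Y N₁ N₂ i s,
      |u p - u (meshNode X Y N₁ N₂ i s)| ≤ meshH X Y N₁ N₂ * constA X Y N f ψ φ u :=
    fun s hs p hp => hu.abs_sub_meshNode_le hX.le hY.le hN.continuous hf hψc hψd hbψ hφc hφd hbφ
      hi hs hp
  have hznorm := znorm_error_le hu hu0 hX.le hY.le hN constA_nonneg hi hj hlip
  have hR : znorm X Y N₁ N₂ (fun p => u p - u0 p) (i - 1) j * coefR X Y N₁ N₂ N u0 i j ≤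
      znorm X Y N₁ N₂ (fun p => u p - u0 p) (i - 1) j *
        (1 + X / N₁ * (Y / N₂) * coefR' X Y N₁ N₂ N u0 i j) :=
    mul_le_mul_of_nonneg_left (coefR_le_one_add hX.le hY.le) znorm_nonneg
  simp only [residualBound] at hznorm
  linarith

/-- First inequality of the auxiliary lemma: with `z = u − u⁰`,
`‖z‖_{i,j} ≤ ‖z‖_{i−1,j}(1 + h₁h₂R′_{i,j})
 + h₁R_{i,j}·h₂·Σ_{s=1}^{j−1}[(2N_{i,s}+L_{i,s})‖z‖_{i,s} + h(N_{i,s}+L_{i,s})A]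
 + h₁h₂R_{i,j}(L_{i,j}+N_{i,j})‖z‖_{i,j−1} + h₁h₂hR_{i,j}(N_{i,j}+L_{i,j})A`. -/
theorem z_norm_first_inequality
    (X Y : ℝ) (hX : 0 < X) (hY : 0 < Y)
    (ν : ℕ → ℝ) (N : ℝ → ℝ)
    (hN : ∀ v : ℝ, HasSum (fun s : ℕ => ν s * v ^ s) (N v))
    (f : ℝ × ℝ → ℝ) (hf : ContinuousOn f (clD X Y))
    (ψ φ : ℝ → ℝ)
    (hψc : ContinuousOn ψ (Icc 0 X))
    (hψd : ∀ x ∈ Ioo (0 : ℝ) X, DifferentiableAt ℝ ψ x)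
    (hφc : ContinuousOn φ (Icc 0 Y))
    (hφd : ∀ y ∈ Ioo (0 : ℝ) Y, DifferentiableAt ℝ φ y)
    (hcomp : ψ 0 = φ 0)
    (N₁ N₂ : ℕ) (hN₁ : 1 ≤ N₁) (hN₂ : 1 ≤ N₂)
    (u : ℝ × ℝ → ℝ) (hu : GoursatSol X Y N f ψ φ u)
    (hbψ : BddAbove ((fun x => |deriv ψ x|) '' Ioo 0 X))
    (hbφ : BddAbove ((fun y => |deriv φ y|) '' Ioo 0 Y))
    (huex : ∀ i ∈ Finset.Icc 1 N₁, ∀ j ∈ Finset.Icc 1 N₂,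
      ∃ g : ℝ × ℝ → ℝ, ContinuousOn g (cellCl X Y N₁ N₂ i j) ∧
        EqOn g (pdx u) (cellOp X Y N₁ N₂ i j))
    (huey : ∀ i ∈ Finset.Icc 1 N₁, ∀ j ∈ Finset.Icc 1 N₂,
      ∃ g : ℝ × ℝ → ℝ, ContinuousOn g (cellCl X Y N₁ N₂ i j) ∧
        EqOn g (pdy u) (cellOp X Y N₁ N₂ i j))
    (huexy : ∀ i ∈ Finset.Icc 1 N₁, ∀ j ∈ Finset.Icc 1 N₂,
      ∃ g : ℝ × ℝ → ℝ, ContinuousOn g (cellCl X Y N₁ N₂ i j) ∧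
        EqOn g (pdxy u) (cellOp X Y N₁ N₂ i j))
    (u0 : ℝ × ℝ → ℝ) (hu0 : BasicSol X Y N f ψ φ N₁ N₂ u0)
    (hu0ex : ∀ i ∈ Finset.Icc 1 N₁, ∀ j ∈ Finset.Icc 1 N₂,
      ∃ g : ℝ × ℝ → ℝ, ContinuousOn g (cellCl X Y N₁ N₂ i j) ∧
        EqOn g (pdx u0) (cellOp X Y N₁ N₂ i j))
    (hu0ey : ∀ i ∈ Finset.Icc 1 N₁, ∀ j ∈ Finset.Icc 1 N₂,
      ∃ g : ℝ × ℝ → ℝ, ContinuousOn g (cellCl X Y N₁ N₂ i j) ∧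
        EqOn g (pdy u0) (cellOp X Y N₁ N₂ i j))
    (hu0exy : ∀ i ∈ Finset.Icc 1 N₁, ∀ j ∈ Finset.Icc 1 N₂,
      ∃ g : ℝ × ℝ → ℝ, ContinuousOn g (cellCl X Y N₁ N₂ i j) ∧
        EqOn g (pdxy u0) (cellOp X Y N₁ N₂ i j)) :
    ∀ i ∈ Finset.Icc 1 N₁, ∀ j ∈ Finset.Icc 1 N₂,
      znorm X Y N₁ N₂ (fun p => u p - u0 p) i j ≤
        znorm X Y N₁ N₂ (fun p => u p - u0 p) (i - 1) j *
            (1 + (X / N₁) * (Y / N₂) * coefR' X Y N₁ N₂ N u0 i j) +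
          (X / N₁) * coefR X Y N₁ N₂ N u0 i j *
            ((Y / N₂) * ∑ s ∈ Finset.Icc 1 (j - 1),
              ((2 * coefN X Y N₁ N₂ N u0 i s + coefL X Y N₁ N₂ N u u0 i s) *
                  znorm X Y N₁ N₂ (fun p => u p - u0 p) i s +
                meshH X Y N₁ N₂ *
                  (coefN X Y N₁ N₂ N u0 i s + coefL X Y N₁ N₂ N u u0 i s) *
                  constA X Y N f ψ φ u)) +
          (X / N₁) * (Y / N₂) * coefR X Y N₁ N₂ N u0 i j *
            (coefL X Y N₁ N₂ N u u0 i j + coefN X Y N₁ N₂ N u0 i j) *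
            znorm X Y N₁ N₂ (fun p => u p - u0 p) i (j - 1) +
          (X / N₁) * (Y / N₂) * meshH X Y N₁ N₂ * coefR X Y N₁ N₂ N u0 i j *
            (coefN X Y N₁ N₂ N u0 i j + coefL X Y N₁ N₂ N u u0 i j) *
            constA X Y N f ψ φ u := by
  exact z_norm_first_inequality_general X Y hX hY N (contDiff_of_forall_hasSum_pow hN) f hf ψ φ
    hψc hψd hφc hφd N₁ N₂ u hu hbψ hbφ u0 hu0
end
end

section
/- Let X, Y > 0, let N₁, N₂ ≥ 1 be integers, h₁ = X/N₁, h₂ = Y/N₂, h = √(h₁² + h₂²), and assume h₁ ≤ h₂. Let a₁, b₁, c₁ ≥ 0 and set a = 1 + h₁a₁, b = h₁b₁, c = h₁·h·c₁. Define μ_{i,j} for i ∈ {0,…,N₁}, j ∈ {0,…,N₂} by μ_{0,j} = μ_{i,0} = 0 and μ_{i,j} = a·μ_{i−1,j} + b·μ_{i,j−1} + c for i, j ≥ 1. Then μ_{i,j} ≤ h·X·c₁·exp((X + Y)·b₁ + X·a₁) for all i ∈ {1,…,N₁}, j ∈ {1,…,N₂}. -/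
/-!
Solutions of a recurrence on a grid whose right-hand side is monotone obey a comparison principle:
a subsolution lying below a supersolution on the two coordinate axes lies below it everywhere.
For the right-hand side `a * x + b * y + c`, the function `c * i * a ^ i * (1 + b) ^ (i + j)` is a
supersolution: with `P = c * a ^ (i + 1) * (1 + b) ^ (i + j + 1)`, the step reads
`i * P + b * (i + 1) * P + c ≤ (i + 1) * (1 + b) * P`, which is just `c ≤ P`. The exponential then
comes from `1 + x ≤ exp x`, and `h₁ ≤ h₂` is what gives `j * h₁ ≤ Y`.
-/

theorem le_of_monotone_grid_recurrence {α : Type*} [Preorder α] {F : ℕ → ℕ → α → α → α}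
    (hF : ∀ i j x x' y y', x ≤ x' → y ≤ y' → F i j x y ≤ F i j x' y') {M N : ℕ} {u v : ℕ → ℕ → α}
    (hleft : ∀ j ≤ N, u 0 j ≤ v 0 j) (hbottom : ∀ i ≤ M, u i 0 ≤ v i 0)
    (hu : ∀ i < M, ∀ j < N, u (i + 1) (j + 1) ≤ F i j (u i (j + 1)) (u (i + 1) j))
    (hv : ∀ i < M, ∀ j < N, F i j (v i (j + 1)) (v (i + 1) j) ≤ v (i + 1) (j + 1)) :
    ∀ i ≤ M, ∀ j ≤ N, u i j ≤ v i j := by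
  intro i
  induction i with
  | zero => exact fun _ ↦ hleft
  | succ i ih_column =>
    intro hi j
    induction j with
    | zero => exact fun _ ↦ hbottom _ hi
    | succ j ih_row =>
      intro hj
      calc u (i + 1) (j + 1)
          ≤ F i j (u i (j + 1)) (u (i + 1) j) := hu i hi j hj
        _ ≤ F i j (v i (j + 1)) (v (i + 1) j) :=
          hF _ _ _ _ _ _ (ih_column (by lia) _ hj) (ih_row (by lia))
        _ ≤ v (i + 1) (j + 1) := hv i hi j hj

section Majorant

variable {R : Type*} [CommSemiring R]

/-- The explicit supersolution `c * i * a ^ i * (1 + b) ^ (i + j)` to which solutions of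
`u (i + 1) (j + 1) = a * u i (j + 1) + b * u (i + 1) j + c` are compared. -/
def gridMajorant (a b c : R) (i j : ℕ) : R :=
  c * i * (a ^ i * (1 + b) ^ (i + j))

variable [PartialOrder R] [IsOrderedRing R] {a b c : R}

theorem gridMajorant_nonneg (ha : 0 ≤ a) (hb : 0 ≤ b) (hc : 0 ≤ c) (i j : ℕ) :
    0 ≤ gridMajorant a b c i j :=
  mul_nonneg (mul_nonneg hc i.cast_nonneg)
    (mul_nonneg (pow_nonneg ha _) (pow_nonneg (add_nonneg zero_le_one hb) _))

theorem gridMajorant_step_le (ha : 1 ≤ a) (hb : 0 ≤ b) (hc : 0 ≤ c) (i j : ℕ) :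
    a * gridMajorant a b c i (j + 1) + b * gridMajorant a b c (i + 1) j + c ≤
      gridMajorant a b c (i + 1) (j + 1) := by
  have one_le_growth : 1 ≤ a ^ (i + 1) * (1 + b) ^ (i + j + 1) :=
    one_le_mul_of_one_le_of_one_le (one_le_pow₀ ha) (one_le_pow₀ (le_add_of_nonneg_right hb))
  calc a * gridMajorant a b c i (j + 1) + b * gridMajorant a b c (i + 1) j + c
      ≤ a * gridMajorant a b c i (j + 1) + b * gridMajorant a b c (i + 1) j +
          c * (a ^ (i + 1) * (1 + b) ^ (i + j + 1)) := by
        gcongr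
        exact le_mul_of_one_le_right hc one_le_growth
    _ = gridMajorant a b c (i + 1) (j + 1) := by
        simp only [gridMajorant]
        push_cast
        ring

theorem le_gridMajorant (ha : 1 ≤ a) (hb : 0 ≤ b) (hc : 0 ≤ c) {M N : ℕ} {u : ℕ → ℕ → R}
    (hleft : ∀ j ≤ N, u 0 j ≤ 0) (hbottom : ∀ i ≤ M, u i 0 ≤ 0)
    (hu : ∀ i < M, ∀ j < N, u (i + 1) (j + 1) ≤ a * u i (j + 1) + b * u (i + 1) j + c) :
    ∀ i ≤ M, ∀ j ≤ N, u i j ≤ gridMajorant a b c i j := by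
  have ha₀ : 0 ≤ a := zero_le_one.trans ha
  have majorant_nonneg := gridMajorant_nonneg ha₀ hb hc
  refine le_of_monotone_grid_recurrence (F := fun _ _ x y ↦ a * x + b * y + c) ?_
    (fun j hj ↦ (hleft j hj).trans (majorant_nonneg 0 j))
    (fun i hi ↦ (hbottom i hi).trans (majorant_nonneg i 0))
    hu (fun i _ j _ ↦ gridMajorant_step_le ha hb hc i j)
  intro _ _ x x' y y' hx hy
  gcongr

end Majorant

theorem one_add_pow_le_exp_nat_mul {x : ℝ} (hx : -1 ≤ x) (n : ℕ) :
    (1 + x) ^ n ≤ Real.exp (n * x) := by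
  rw [Real.exp_nat_mul, add_comm]
  exact pow_le_pow_left₀ (neg_le_iff_add_nonneg.mp hx) (Real.add_one_le_exp x) n

theorem gridMajorant_one_add_le_exp {p q c : ℝ} (hp : -1 ≤ p) (hq : -1 ≤ q) (hc : 0 ≤ c)
    (i j : ℕ) :
    gridMajorant (1 + p) q c i j ≤ c * i * Real.exp (i * p + (i + j) * q) := by
  have hq₀ : 0 ≤ 1 + q := by linarith
  have exp_q : (1 + q) ^ (i + j) ≤ Real.exp ((i + j) * q) := by
    exact_mod_cast one_add_pow_le_exp_nat_mul hq (i + j)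
  rw [gridMajorant, Real.exp_add]
  gcongr
  exact one_add_pow_le_exp_nat_mul hp i

/-- Bound for the two-dimensional linear recurrence
`μ_{i,j} = a·μ_{i−1,j} + b·μ_{i,j−1} + c` with `a = 1 + h₁a₁`, `b = h₁b₁`, `c = h₁·h·c₁`
and zero boundary values: under `h₁ ≤ h₂` one has
`μ_{i,j} ≤ h·X·c₁·exp((X+Y)b₁ + X·a₁)`. -/
theorem mu_recurrence_bound (X Y : ℝ) (hX : 0 < X) (hY : 0 < Y)
    (N₁ N₂ : ℕ) (hN₁ : 1 ≤ N₁) (hN₂ : 1 ≤ N₂)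
    (hh : X / N₁ ≤ Y / N₂)
    (a₁ b₁ c₁ : ℝ) (ha₁ : 0 ≤ a₁) (hb₁ : 0 ≤ b₁) (hc₁ : 0 ≤ c₁)
    (μ : ℕ → ℕ → ℝ)
    (hμ0 : ∀ j ≤ N₂, μ 0 j = 0) (hμ0' : ∀ i ≤ N₁, μ i 0 = 0)
    (hrec : ∀ i j : ℕ, 1 ≤ i → i ≤ N₁ → 1 ≤ j → j ≤ N₂ →
      μ i j = (1 + (X / N₁) * a₁) * μ (i - 1) j + ((X / N₁) * b₁) * μ i (j - 1)
        + (X / N₁) * Real.sqrt ((X / N₁) ^ 2 + (Y / N₂) ^ 2) * c₁) :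
    ∀ i ∈ Finset.Icc 1 N₁, ∀ j ∈ Finset.Icc 1 N₂,
      μ i j ≤ Real.sqrt ((X / N₁) ^ 2 + (Y / N₂) ^ 2) * X * c₁ *
        Real.exp ((X + Y) * b₁ + X * a₁) := by
  intro i hi j hj
  obtain ⟨-, hi⟩ := Finset.mem_Icc.mp hi
  obtain ⟨-, hj⟩ := Finset.mem_Icc.mp hj
  set h₁ := X / N₁
  set h := Real.sqrt (h₁ ^ 2 + (Y / N₂) ^ 2)
  have hiX : i * h₁ ≤ X := calc
    i * h₁ ≤ N₁ * h₁ := by gcongr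
    _ = X := mul_div_cancel₀ X (by positivity)
  have hjY : j * h₁ ≤ Y := calc
    j * h₁ ≤ N₂ * (Y / N₂) := by gcongr
    _ = Y := mul_div_cancel₀ Y (by positivity)
  calc μ i j
      ≤ gridMajorant (1 + h₁ * a₁) (h₁ * b₁) (h₁ * h * c₁) i j :=
        le_gridMajorant (le_add_of_nonneg_right (by positivity)) (by positivity) (by positivity)
          (fun j hj ↦ (hμ0 j hj).le) (fun i hi ↦ (hμ0' i hi).le)
          (fun i hi j hj ↦ (hrec (i + 1) (j + 1) (by lia) hi (by lia) hj).le) i hi j hj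
    _ ≤ h₁ * h * c₁ * i * Real.exp (i * (h₁ * a₁) + (i + j) * (h₁ * b₁)) :=
        gridMajorant_one_add_le_exp (neg_one_lt_zero.le.trans (by positivity))
          (neg_one_lt_zero.le.trans (by positivity)) (by positivity) i j
    _ = h * (i * h₁) * c₁ * Real.exp ((i * h₁ + j * h₁) * b₁ + i * h₁ * a₁) := by ring_nf
    _ ≤ h * X * c₁ * Real.exp ((X + Y) * b₁ + X * a₁) := by gcongr
end

section
/- Let a, b, c be real numbers and let N₁, N₂ ≥ 1 be integers. Define μ_{i,j} for i ∈ {0,…,N₁}, j ∈ {0,…,N₂} by μ_{0,j} = 0 for j ∈ {0,…,N₂}, μ_{i,0} = 0 for i ∈ {0,…,N₁}, and μ_{i,j} = a·μ_{i−1,j} + b·μ_{i,j−1} + c for i, j ≥ 1. Then for all i ∈ {1,…,N₁} and j ∈ {1,…,N₂}: μ_{i,j} = c · Σ_{k=0}^{j−1} Σ_{p=0}^{i−1} ((k+p)!/(k!·p!)) · a^p · b^k. -/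
/-!
The coefficient `C(k + p, k) aᵖ bᵏ` is the total weight of the lattice paths from the origin to
`(p, k)` with horizontal steps of weight `a` and vertical steps of weight `b`. Splitting off the
last step (Pascal's rule) and summing over a rectangle shows that the rectangle sums satisfy the
recurrence with source term `1`, the contribution of the empty path. The recurrence and the
boundary values determine `μ`, so `μ` is `c` times these sums.
-/

open Finset

section LatticePaths

variable {R : Type*} [CommSemiring R]

/-- The total weight of the monotone lattice paths with `p` horizontal steps, each of weight `a`,
and `k` vertical steps, each of weight `b`, in closed form. -/
def latticePathWeight (a b : R) (p k : ℕ) : R :=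
  (k + p).choose k * a ^ p * b ^ k

variable (a b : R)

lemma latticePathWeight_zero_right (p : ℕ) : latticePathWeight a b p 0 = a ^ p := by
  simp [latticePathWeight]

lemma latticePathWeight_zero_left (k : ℕ) : latticePathWeight a b 0 k = b ^ k := by
  simp [latticePathWeight]

lemma latticePathWeight_succ_succ (p k : ℕ) :
    latticePathWeight a b (p + 1) (k + 1) =
      a * latticePathWeight a b p (k + 1) + b * latticePathWeight a b (p + 1) k := by
  have pascal : (k + 1 + (p + 1)).choose (k + 1) =
      (k + (p + 1)).choose k + (k + 1 + p).choose (k + 1) := by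
    rw [Nat.add_right_comm k 1, Nat.choose_succ_succ', Nat.add_right_comm k 1 p, Nat.add_assoc k p]
  simp only [latticePathWeight, pascal, Nat.cast_add]
  ring

lemma sum_latticePathWeight_zero_right_succ (i : ℕ) :
    ∑ p ∈ range (i + 1), latticePathWeight a b p 0 =
      a * ∑ p ∈ range i, latticePathWeight a b p 0 + 1 := by
  simp only [latticePathWeight_zero_right, sum_range_succ', pow_succ', mul_sum, pow_zero]

lemma sum_latticePathWeight_succ_succ (i k : ℕ) :
    ∑ p ∈ range (i + 1), latticePathWeight a b p (k + 1) =
      a * ∑ p ∈ range i, latticePathWeight a b p (k + 1) +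
        b * ∑ p ∈ range (i + 1), latticePathWeight a b p k := by
  simp only [sum_range_succ' _ i, latticePathWeight_succ_succ, latticePathWeight_zero_left,
    sum_add_distrib, ← mul_sum]
  ring

lemma sum_sum_latticePathWeight_succ_succ (i j : ℕ) :
    ∑ k ∈ range (j + 1), ∑ p ∈ range (i + 1), latticePathWeight a b p k =
      a * ∑ k ∈ range (j + 1), ∑ p ∈ range i, latticePathWeight a b p k +
        b * ∑ k ∈ range j, ∑ p ∈ range (i + 1), latticePathWeight a b p k + 1 := by
  simp only [sum_range_succ' _ j, sum_latticePathWeight_succ_succ,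
    sum_latticePathWeight_zero_right_succ, sum_add_distrib, ← mul_sum]
  ring

end LatticePaths

theorem mu_recurrence_explicit_general {R : Type*} [CommSemiring R] {a b c : R} {N₁ N₂ : ℕ}
    {μ : ℕ → ℕ → R} (hμ_zero_left : ∀ j ≤ N₂, μ 0 j = 0) (hμ_zero_right : ∀ i ≤ N₁, μ i 0 = 0)
    (hμ_succ_succ : ∀ i < N₁, ∀ j < N₂,
      μ (i + 1) (j + 1) = a * μ i (j + 1) + b * μ (i + 1) j + c) :
    ∀ i ≤ N₁, ∀ j ≤ N₂,
      μ i j = c * ∑ k ∈ range j, ∑ p ∈ range i, ((k + p).choose k : R) * a ^ p * b ^ k := by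
  change ∀ i ≤ N₁, ∀ j ≤ N₂, μ i j = c * ∑ k ∈ range j, ∑ p ∈ range i, latticePathWeight a b p k
  intro i hi j hj
  induction i generalizing j with
  | zero => simp [hμ_zero_left j hj]
  | succ i ih_left =>
    induction j with
    | zero => simp [hμ_zero_right (i + 1) hi]
    | succ j ih_below =>
      rw [hμ_succ_succ i hi j hj, ih_left (Nat.le_of_succ_le hi) (j + 1) hj,
        ih_below (Nat.le_of_succ_le hj), sum_sum_latticePathWeight_succ_succ]
      ring

/-- Explicit solution formula for the two-dimensional linear recurrence
`μ_{i,j} = a·μ_{i−1,j} + b·μ_{i,j−1} + c` with zero boundary values: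
`μ_{i,j} = c·Σ_{k=0}^{j−1} Σ_{p=0}^{i−1} C(k+p,k)·aᵖ·bᵏ`. -/
theorem mu_recurrence_explicit (a b c : ℝ) (N₁ N₂ : ℕ) (hN₁ : 1 ≤ N₁) (hN₂ : 1 ≤ N₂)
    (μ : ℕ → ℕ → ℝ)
    (hμ0 : ∀ j ≤ N₂, μ 0 j = 0) (hμ0' : ∀ i ≤ N₁, μ i 0 = 0)
    (hrec : ∀ i j : ℕ, 1 ≤ i → i ≤ N₁ → 1 ≤ j → j ≤ N₂ →
      μ i j = a * μ (i - 1) j + b * μ i (j - 1) + c) :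
    ∀ i ∈ Finset.Icc 1 N₁, ∀ j ∈ Finset.Icc 1 N₂,
      μ i j = c * ∑ k ∈ Finset.range j, ∑ p ∈ Finset.range i,
        (((k + p).choose k : ℕ) : ℝ) * a ^ p * b ^ k := by
  intro i hi j hj
  exact mu_recurrence_explicit_general hμ0 hμ0'
    (fun i hi j hj ↦ hrec (i + 1) (j + 1) i.succ_pos hi j.succ_pos hj)
    i (mem_Icc.1 hi).2 j (mem_Icc.1 hj).2
end
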